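/- arXiv:2605.21438 — 4 statements merged into one kernel-verified Lean document; each statement's English description precedes it below -/
import Mathlib

section
/- Let d ≥ 1 be an integer and a₀ > 0. Let X = (X_k)_{k≥0} be a symmetric random walk on ℝ^d started at 0, let M ≥ 1, and assume P[X_1 ∉ B_M(0)] ≥ a₀. Then there exists C > 0 depending only on (a₀, d) such that for every integer n ≥ 1, sup_{y ∈ ℝ^d} P[X_n ∈ B_M(y)] ≤ C/n^{d/2}. -/
open scoped ENNReal
open MeasureTheory

noncomputable section

namespace BlackboxRW

/-- Supremum norm of a lattice point. -/
def supNorm {d : ℕ} (x : Fin d → ℤ) : ℝ :=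
  ((Finset.univ.sup fun i => (x i).natAbs : ℕ) : ℝ)

/-- Supremum norm of a point of `ℝ^d`. -/
def supNormR {d : ℕ} (y : Fin d → ℝ) : ℝ :=
  if h : (Finset.univ : Finset (Fin d)).Nonempty then Finset.univ.sup' h fun i => |y i|
  else 0

/-- First coordinate (dot product with `e₁`). -/
def e1 {d : ℕ} (y : Fin d → ℝ) : ℝ := if h : 0 < d then y ⟨0, h⟩ else 0

/-- The box `B_r(c) = c + [-r,r]^d ⊆ ℝ^d`. -/
def box {d : ℕ} (r : ℝ) (c : Fin d → ℝ) : Set (Fin d → ℝ) := {y | ∀ i, |y i - c i| ≤ r}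

/-- Invariance of a measure on `ℝ^d` under coordinate permutations and sign flips. -/
def IsSymmMeasure {d : ℕ} (μ : Measure (Fin d → ℝ)) : Prop :=
  ∀ (π : Equiv.Perm (Fin d)) (e : Fin d → Bool),
    μ.map (fun x i => (if e i then (-1:ℝ) else 1) * x (π i)) = μ

/-- Law of the position after `n` i.i.d. steps of law `μ`, for the walk started at `0`. -/
def stepIter {d : ℕ} (μ : Measure (Fin d → ℝ)) : ℕ → Measure (Fin d → ℝ)
  | 0 => Measure.dirac 0
  | n + 1 => ((stepIter μ n).prod μ).map fun p => p.1 + p.2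

/-- The standard deviation `σ` of one step: `σ² = E[|X₁|₂²]`. -/
def walkSigma {d : ℕ} (μ : Measure (Fin d → ℝ)) : ℝ :=
  Real.sqrt (∫ x, (∑ i, x i ^ 2) ∂μ)

/-- A symmetric random walk on `ℝ^d` (started at `0`, i.i.d. steps). -/
structure SymmRW (d : ℕ) where
  μ : Measure (Fin d → ℝ)
  prob : IsProbabilityMeasure μ
  symm : IsSymmMeasure μ

/-- A `(c_M, C_M)`-regular random walk on `ℝ^d`. -/
structure RegularRW (d : ℕ) (cM CM : ℝ) where
  μ : Measure (Fin d → ℝ)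
  prob : IsProbabilityMeasure μ
  symm : IsSymmMeasure μ
  var_integrable : Integrable (fun x => ∑ i, x i ^ 2) μ
  mgf_le : ∫⁻ x, ENNReal.ofReal (Real.exp (cM / walkSigma μ * e1 x)) ∂μ ≤
    ENNReal.ofReal CM

/-- The Green function `𝔾_λ(A) = ∑_{m ≥ 0} λ^m P[X_m ∈ A]`. -/
def green {d : ℕ} (μ : Measure (Fin d → ℝ)) (lam : ℝ) (A : Set (Fin d → ℝ)) : ℝ≥0∞ :=
  ∑' m : ℕ, ENNReal.ofReal (lam ^ m) * stepIter μ m A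

end BlackboxRW
open BlackboxRW


lemma aux_central (k : ℕ) : (Nat.centralBinom k)^2 * (2*k+1) ≤ 16^k := by
  induction k with
  | zero => simp
  | succ k ih =>
    have h := Nat.succ_mul_centralBinom_succ k
    have h2 : (k+1)^2 * ((Nat.centralBinom (k+1))^2 * (2*(k+1)+1)) ≤ (k+1)^2 * 16^(k+1) := by
      calc (k+1)^2 * ((Nat.centralBinom (k+1))^2 * (2*(k+1)+1))
          = ((k+1) * Nat.centralBinom (k+1))^2 * (2*k+3) := by ring
        _ = (4*(2*k+1)*(2*k+3)) * ((Nat.centralBinom k)^2 * (2*k+1)) := by rw [h]; ring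
        _ ≤ (4*(2*k+1)*(2*k+3)) * 16^k := by gcongr
        _ ≤ (16*(k+1)^2) * 16^k := Nat.mul_le_mul_right _ (by nlinarith)
        _ = _ := by ring
    exact Nat.le_of_mul_le_mul_left h2 (by positivity)

lemma aux_choose (m : ℕ) : (m.choose (m/2))^2 * (m+1) ≤ 4^m := by
  rcases Nat.even_or_odd' m with ⟨k, rfl | rfl⟩
  · have := aux_central k
    rw [Nat.centralBinom_eq_two_mul_choose] at this
    have h : 2*k/2 = k := by omega
    rw [h, pow_mul]; exact this
  · have := aux_central (k+1)
    rw [Nat.centralBinom_eq_two_mul_choose] at this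
    have e : (2*(k+1)).choose (k+1) = 2 * (2*k+1).choose k := by
      have h1 : (2*(k+1)) = (2*k+1)+1 := by ring
      rw [h1, Nat.choose_succ_succ]
      have : (2*k+1).choose (k+1) = (2*k+1).choose k := by
        rw [← Nat.choose_symm (by omega)]; congr 1; omega
      rw [Nat.succ_eq_add_one, this]; ring
    have h : (2*k+1)/2 = k := by omega
    rw [h]
    rw [e] at this
    have e2 : (16:ℕ)^(k+1) = 4 * 4^(2*k+1) := by
      rw [pow_succ 4 (2*k), pow_mul, pow_succ]; norm_num; ring
    rw [e2] at this
    nlinarith [sq_nonneg ((2*k+1).choose k)]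

/-- sign -/
def sg (b : Bool) : ℝ := if b then (-1:ℝ) else 1

lemma aux_LO (n : ℕ) (a : Fin n → ℝ) (M y : ℝ) (hM : 0 < M) :
    (Finset.univ.filter (fun T : Finset (Fin n) =>
      |(∑ k, sg (decide (k ∈ T)) * a k) - y| ≤ M)).card ≤
    2^(n - (Finset.univ.filter (fun k => M < |a k|)).card) *
     ((Finset.univ.filter (fun k => M < |a k|)).card.choose
      ((Finset.univ.filter (fun k => M < |a k|)).card/2)) := by
  classical
  set A := Finset.univ.filter (fun k => M < |a k|) with hA
  set S := (Finset.univ.filter (fun T : Finset (Fin n) =>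
      |(∑ k, sg (decide (k ∈ T)) * a k) - y| ≤ M)) with hS
  have hmaps : ∀ T ∈ S, T \ A ∈ (Aᶜ).powerset := by
    intro T _
    rw [Finset.mem_powerset]
    intro k hk
    simp at hk ⊢
    exact hk.2
  have hcard : (Aᶜ).powerset.card = 2^(n - A.card) := by
    rw [Finset.card_powerset, Finset.card_compl, Fintype.card_fin]
  rw [← hcard, mul_comm]
  refine Finset.card_le_mul_card_image_of_maps_to (f := fun T => T \ A) hmaps _ ?_
  intro r _
  let ψ : Finset (Fin n) → Finset A := fun T =>
    Finset.univ.filter (fun k : A => (k.1 ∈ T) ↔ a k.1 < 0)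
  have key : ∀ T₁ T₂ : Finset (Fin n), T₁ \ A = T₂ \ A → ψ T₁ ⊆ ψ T₂ →
      ∀ k, sg (decide (k ∈ T₁)) * a k ≤ sg (decide (k ∈ T₂)) * a k := by
    intro T₁ T₂ h h' k
    by_cases hk : k ∈ A
    · have h1 := @h' ⟨k, hk⟩
      simp only [ψ, Finset.mem_filter, Finset.mem_univ, true_and] at h1
      by_cases h2 : k ∈ T₁ <;> by_cases h3 : k ∈ T₂ <;> simp [sg, h2, h3] at h1 ⊢ <;> grind
    · have : k ∈ T₁ ↔ k ∈ T₂ := by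
        have := congrArg (k ∈ ·) h
        simpa [hk] using this
      simp [this]
  have inj : ∀ T₁ T₂ : Finset (Fin n), T₁ \ A = T₂ \ A → ψ T₁ = ψ T₂ → T₁ = T₂ := by
    intro T₁ T₂ h h'
    ext k
    by_cases hk : k ∈ A
    · have h1 := congrArg ((⟨k, hk⟩ : A) ∈ ·) h'
      simp only [ψ, Finset.mem_filter, Finset.mem_univ, true_and] at h1
      by_cases h2 : k ∈ T₁ <;> by_cases h3 : k ∈ T₂ <;> simp [h2, h3] at h1 ⊢ <;> grind
    · have := congrArg (k ∈ ·) h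
      simpa [hk] using this
  have hanti : IsAntichain (· ⊆ ·)
      (SetLike.coe ((S.filter (fun T => T \ A = r)).image ψ)) := by
    intro u hu v hv huv hsub
    simp only [SetLike.mem_coe, Finset.mem_image, Finset.mem_filter] at hu hv
    obtain ⟨T₁, ⟨hT₁, e₁⟩, rfl⟩ := hu
    obtain ⟨T₂, ⟨hT₂, e₂⟩, rfl⟩ := hv
    have hall := key T₁ T₂ (e₁.trans e₂.symm) hsub
    obtain ⟨k, hk2, hk1⟩ := Finset.exists_of_ssubset (lt_of_le_of_ne hsub huv)
    have hkA : M < |a k.1| := by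
      exact (Finset.mem_filter.1 k.2).2
    have hstep : sg (decide (k.1 ∈ T₁)) * a k.1 + 2 * |a k.1|
        ≤ sg (decide (k.1 ∈ T₂)) * a k.1 := by
      simp only [ψ, Finset.mem_filter, Finset.mem_univ, true_and] at hk1 hk2
      rcases lt_or_ge (a k.1) 0 with h0 | h0
      · by_cases h2 : k.1 ∈ T₁ <;> by_cases h3 : k.1 ∈ T₂ <;>
          simp [h0, h2, h3, sg, abs_of_neg] at hk1 hk2 ⊢ ; linarith
      · have := not_lt.2 h0
        by_cases h2 : k.1 ∈ T₁ <;> by_cases h3 : k.1 ∈ T₂ <;>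
          simp [h2, h3, sg, abs_of_nonneg h0, this] at hk1 hk2 ⊢ <;> linarith
    have hsum : (∑ k, sg (decide (k ∈ T₁)) * a k) + 2 * |a k.1| ≤
        ∑ k, sg (decide (k ∈ T₂)) * a k := by
      rw [← Finset.add_sum_erase _ _ (Finset.mem_univ k.1),
        ← Finset.add_sum_erase _ (fun k => sg (decide (k ∈ T₂)) * a k) (Finset.mem_univ k.1)]
      have := Finset.sum_le_sum (s := Finset.univ.erase k.1) (fun j _ => hall j)
      linarith
    simp only [hS, Finset.mem_filter, Finset.mem_univ, true_and] at hT₁ hT₂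
    have b1 := (abs_le.1 hT₁).1
    have b2 := (abs_le.1 hT₂).2
    linarith
  have hsp := hanti.sperner
  rw [Fintype.card_coe] at hsp
  rw [Finset.card_image_of_injOn] at hsp
  · exact hsp
  · intro T₁ h₁ T₂ h₂ h
    simp only [SetLike.mem_coe, Finset.mem_filter] at h₁ h₂
    exact inj _ _ (h₁.2.trans h₂.2.symm) h

lemma aux_LO' (n : ℕ) (a : Fin n → ℝ) (M y : ℝ) (hM : 0 < M) :
    ((Finset.univ.filter (fun T : Finset (Fin n) =>
      |(∑ k, sg (decide (k ∈ T)) * a k) - y| ≤ M)).card : ℝ) / 2^n ≤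
    1 / Real.sqrt ((Finset.univ.filter (fun k => M < |a k|)).card + 1) := by
  have h := aux_LO n a M y hM
  set m := (Finset.univ.filter (fun k => M < |a k|)).card with hm
  have hmn : m ≤ n := by simpa using Finset.card_le_univ (Finset.univ.filter (fun k => M < |a k|))
  have h2 : ((Finset.univ.filter (fun T : Finset (Fin n) =>
      |(∑ k, sg (decide (k ∈ T)) * a k) - y| ≤ M)).card : ℝ) ≤ 2^(n-m) * (m.choose (m/2) : ℝ) := by
    exact_mod_cast h
  have hc : ((m.choose (m/2) : ℝ))^2 * (m+1) ≤ 4^m := by exact_mod_cast aux_choose m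
  have hc2 : (m.choose (m/2) : ℝ) * Real.sqrt (m+1) ≤ 2^m := by
    refine (sq_le_sq₀ (by positivity) (by positivity)).1 ?_
    rw [mul_pow, Real.sq_sqrt (by positivity), ← pow_mul, mul_comm m 2, pow_mul]
    norm_num; exact hc
  have hs : 0 < Real.sqrt ((m:ℝ)+1) := by positivity
  rw [div_le_div_iff₀ (by positivity) hs, one_mul]
  calc _ ≤ 2^(n-m) * (m.choose (m/2) : ℝ) * Real.sqrt (m+1) := by gcongr
    _ ≤ 2^(n-m) * 2^m := by rw [mul_assoc]; gcongr
    _ = 2^n := by rw [← pow_add]; congr 1; omega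
lemma aux_iter {d : ℕ} (μ : Measure (Fin d → ℝ)) [IsProbabilityMeasure μ] (n : ℕ) :
    stepIter μ n = (Measure.pi (fun _ : Fin n => μ)).map (fun x => ∑ k, x k) := by
  induction n with
  | zero =>
    simp [stepIter]
  | succ n ih =>
    have hp := measurePreserving_piFinSuccAbove (fun _ : Fin (n+1) => μ) 0
    have hmeas : Measurable (fun x : Fin n → Fin d → ℝ => ∑ k, x k) := by fun_prop
    rw [stepIter, ih]
    have e1 : (Measure.map (fun x : Fin n → Fin d → ℝ => ∑ k, x k)
        (Measure.pi fun _ => μ)).prod μ =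
        ((Measure.pi fun _ : Fin n => μ).prod μ).map (Prod.map (fun x => ∑ k, x k) id) := by
      rw [← Measure.map_prod_map _ _ hmeas measurable_id, Measure.map_id]
    rw [e1, ← Measure.prod_swap, ← hp.map_eq, Measure.map_map, Measure.map_map, Measure.map_map]
    · congr 1
      funext x
      simp [Fin.sum_univ_succ, add_comm, MeasurableEquiv.piFinSuccAbove, Fin.tail]
    all_goals fun_prop

lemma aux_sign {d : ℕ} (μ : Measure (Fin d → ℝ)) [IsProbabilityMeasure μ] (hs : IsSymmMeasure μ)
    (n : ℕ) (s : Fin d → Finset (Fin n)) :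
    MeasurePreserving (fun (x : Fin n → Fin d → ℝ) k i => sg (decide (k ∈ s i)) * x k i)
      (Measure.pi (fun _ : Fin n => μ)) (Measure.pi (fun _ : Fin n => μ)) := by
  refine measurePreserving_pi (f := fun k (x : Fin d → ℝ) i => sg (decide (k ∈ s i)) * x i) _ _ ?_
  intro k
  refine ⟨by fun_prop, ?_⟩
  exact hs (Equiv.refl _) (fun i => decide (k ∈ s i))

lemma aux_box_meas {d : ℕ} (M : ℝ) (y : Fin d → ℝ) : MeasurableSet (box M y) := by
  have : box M y = ⋂ i, {z : Fin d → ℝ | |z i - y i| ≤ M} := by ext; simp [box]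
  rw [this]
  exact MeasurableSet.iInter fun i => measurableSet_le (by fun_prop) measurable_const

/-- number of good sign patterns -/
def NN {n : ℕ} (a : Fin n → ℝ) (M y : ℝ) : ℕ :=
  (Finset.univ.filter (fun T : Finset (Fin n) =>
      |(∑ k, sg (decide (k ∈ T)) * a k) - y| ≤ M)).card

/-- number of big steps -/
def mm {n : ℕ} (a : Fin n → ℝ) (M : ℝ) : ℕ := (Finset.univ.filter (fun k => M < |a k|)).card

lemma aux_avg {d : ℕ} (μ : Measure (Fin d → ℝ)) [IsProbabilityMeasure μ] (hs : IsSymmMeasure μ)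
    (n : ℕ) (M : ℝ) (y : Fin d → ℝ) :
    ((2:ℝ≥0∞)^n)^d * stepIter μ n (box M y) =
      ∫⁻ x, ((∏ i, NN (fun k => x k i) M (y i) : ℕ) : ℝ≥0∞) ∂(Measure.pi (fun _ : Fin n => μ)) := by
  classical
  have h1 : ∀ s : Fin d → Finset (Fin n), stepIter μ n (box M y) =
      ∫⁻ x, (if ∀ i, |(∑ k, sg (decide (k ∈ s i)) * x k i) - y i| ≤ M then 1 else 0)
        ∂(Measure.pi (fun _ : Fin n => μ)) := by
    intro s
    rw [aux_iter, Measure.map_apply (by fun_prop) (aux_box_meas M y),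
      ← (aux_sign μ hs n s).measure_preimage
        ((measurableSet_preimage (by fun_prop) (aux_box_meas M y)).nullMeasurableSet),
      ← lintegral_indicator_one (measurableSet_preimage (aux_sign μ hs n s).measurable
          (measurableSet_preimage (by fun_prop) (aux_box_meas M y)))]
    congr 1
    funext x
    simp [Set.indicator_apply, box]
  have h2 : ((2:ℝ≥0∞)^n)^d * stepIter μ n (box M y) =
      ∑ s : Fin d → Finset (Fin n), stepIter μ n (box M y) := by
    simp
  rw [h2, Finset.sum_congr rfl (fun s _ => h1 s), ← lintegral_finsetSum]
  · congr 1
    funext x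
    rw [Finset.sum_boole]
    congr 1
    unfold NN
    rw [← Fintype.card_piFinset]
    congr 1
    ext s
    simp
  · intro s _
    refine Measurable.ite ?_ measurable_const measurable_const
    have : {x : Fin n → Fin d → ℝ | ∀ i, |(∑ k, sg (decide (k ∈ s i)) * x k i) - y i| ≤ M} =
      ⋂ i, {x : Fin n → Fin d → ℝ | |(∑ k, sg (decide (k ∈ s i)) * x k i) - y i| ≤ M} := by
      ext; simp
    rw [this]
    exact MeasurableSet.iInter fun i => measurableSet_le (by fun_prop) measurable_const

lemma aux_point {d n : ℕ} (x : Fin n → Fin d → ℝ) (M : ℝ) (hM : 0 < M) (y : Fin d → ℝ) (r : ℝ)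
    (hr : 0 < r) :
    ∏ i, ((NN (fun k => x k i) M (y i) : ℝ) / 2^n) ≤
      (1 / Real.sqrt r)^d + ∑ i, Real.exp r * (1/2)^(mm (fun k => x k i) M) := by
  have h0 : ∀ i, 0 ≤ ((NN (fun k => x k i) M (y i) : ℝ) / 2^n) := fun i => by positivity
  have hb : ∀ i, ((NN (fun k => x k i) M (y i) : ℝ) / 2^n) ≤
      1 / Real.sqrt (mm (fun k => x k i) M + 1) := fun i => aux_LO' n _ M _ hM
  have hS : 0 ≤ ∑ i, Real.exp r * (1/2:ℝ)^(mm (fun k => x k i) M) := by positivity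
  by_cases h : ∀ i, r ≤ mm (fun k => x k i) M + 1
  · have : ∏ i, ((NN (fun k => x k i) M (y i) : ℝ) / 2^n) ≤ ∏ i : Fin d, (1 / Real.sqrt r) := by
      refine Finset.prod_le_prod (fun i _ => h0 i) (fun i _ => (hb i).trans ?_)
      exact one_div_le_one_div_of_le (Real.sqrt_pos.2 hr) (Real.sqrt_le_sqrt (h i))
    simp only [Finset.prod_const, Finset.card_univ, Fintype.card_fin] at this
    linarith
  · push Not at h
    obtain ⟨i, hi⟩ := h
    have h1 : ∏ i, ((NN (fun k => x k i) M (y i) : ℝ) / 2^n) ≤ 1 := by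
      refine Finset.prod_le_one (fun i _ => h0 i) (fun i _ => (hb i).trans ?_)
      rw [div_le_one (by positivity)]
      exact Real.one_le_sqrt.2 (by simp)
    have h2 : 1 ≤ Real.exp r * (1/2:ℝ)^(mm (fun k => x k i) M) := by
      have : (2:ℝ)^(mm (fun k => x k i) M) ≤ Real.exp r := by
        calc (2:ℝ)^(mm (fun k => x k i) M) ≤ (Real.exp 1)^(mm (fun k => x k i) M) := by
              gcongr; linarith [Real.add_one_le_exp 1]
          _ = Real.exp (mm (fun k => x k i) M) := by rw [← Real.exp_nat_mul, mul_one]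
          _ ≤ _ := Real.exp_le_exp.2 (by linarith)
      rw [one_div, inv_pow, ← div_eq_mul_inv, le_div_iff₀ (by positivity)]
      linarith
    have h3 := Finset.single_le_sum (f := fun i => Real.exp r * (1/2:ℝ)^(mm (fun k => x k i) M))
      (fun i _ => by positivity) (Finset.mem_univ i)
    have h4 : 0 ≤ (1 / Real.sqrt r)^d := by positivity
    linarith

lemma aux_p {d : ℕ} (hd : 1 ≤ d) (μ : Measure (Fin d → ℝ)) [IsProbabilityMeasure μ]
    (hs : IsSymmMeasure μ)
    (M a₀ : ℝ) (ha : ENNReal.ofReal a₀ ≤ μ (box M 0)ᶜ) (i : Fin d) :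
    a₀ / d ≤ μ.real {x | M < |x i|} := by
  have hm : ∀ j : Fin d, MeasurableSet {x : Fin d → ℝ | M < |x j|} := fun j =>
    measurableSet_lt measurable_const (by fun_prop)
  have heq : ∀ j, μ {x | M < |x j|} = μ {x | M < |x i|} := by
    intro j
    have := hs (Equiv.swap i j) (fun _ => false)
    conv_rhs => rw [← this]
    rw [Measure.map_apply (by fun_prop) (hm i)]
    simp
  have hsub : (box M 0)ᶜ ⊆ ⋃ j : Fin d, {x : Fin d → ℝ | M < |x j|} := by
    intro x; simp [box]
  have h1 : μ (box M 0)ᶜ ≤ d * μ {x | M < |x i|} := by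
    calc _ ≤ _ := measure_mono hsub
      _ ≤ ∑ j : Fin d, μ {x : Fin d → ℝ | M < |x j|} := measure_iUnion_fintype_le _ _
      _ = _ := by simp [heq]
  have h2 : ENNReal.ofReal a₀ ≤ ENNReal.ofReal (d * μ.real {x | M < |x i|}) := by
    rw [ENNReal.ofReal_mul (by positivity), ENNReal.ofReal_natCast, ofReal_measureReal]
    exact ha.trans h1
  have h3 := (ENNReal.ofReal_le_ofReal_iff (by positivity)).1 h2
  rw [div_le_iff₀ (by exact_mod_cast hd)]
  linarith

lemma aux_exp {d : ℕ} (μ : Measure (Fin d → ℝ)) [IsProbabilityMeasure μ]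
    (M q : ℝ) (n : ℕ) (i : Fin d) (hq : q ≤ μ.real {x | M < |x i|}) :
    ∫⁻ x, ENNReal.ofReal ((1/2)^(mm (fun k => x k i) M)) ∂(Measure.pi (fun _ : Fin n => μ)) ≤
      ENNReal.ofReal (Real.exp (-(q/2) * n)) := by
  classical
  have hm : MeasurableSet {x : Fin d → ℝ | M < |x i|} :=
    measurableSet_lt measurable_const (by fun_prop)
  let w : (Fin d → ℝ) → ℝ≥0∞ := fun z => ENNReal.ofReal (if M < |z i| then 1/2 else 1)
  have hw : Measurable w := by
    refine ENNReal.measurable_ofReal.comp (Measurable.ite hm measurable_const measurable_const)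
  have e : ∀ x : Fin n → Fin d → ℝ, ENNReal.ofReal ((1/2)^(mm (fun k => x k i) M)) =
      ∏ k, w (x k) := by
    intro x
    simp only [w]
    rw [← ENNReal.ofReal_prod_of_nonneg (fun k _ => by split_ifs <;> norm_num)]
    congr 1
    simp [mm, Finset.prod_ite]
  have hone : ∫⁻ z, w z ∂μ ≤ ENNReal.ofReal (Real.exp (-(q/2))) := by
    have : ∫⁻ z, w z ∂μ = ENNReal.ofReal (1 - μ.real {x | M < |x i|} / 2) := by
      have hint : Integrable (fun z : Fin d → ℝ => if M < |z i| then (1/2:ℝ) else 1) μ := by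
        refine Integrable.of_bound (C := 1) (Measurable.ite hm measurable_const
          measurable_const).aestronglyMeasurable (Filter.Eventually.of_forall fun z => ?_)
        split_ifs <;> norm_num
      rw [← ofReal_integral_eq_lintegral_ofReal hint (Filter.Eventually.of_forall fun z => by
        dsimp; split_ifs <;> norm_num)]
      congr 1
      have : (fun z : Fin d → ℝ => if M < |z i| then (1/2:ℝ) else 1) =
          fun z => 1 - Set.indicator {x : Fin d → ℝ | M < |x i|} (fun _ => (1/2:ℝ)) z := by
        funext z
        simp only [Set.indicator_apply, Set.mem_ofPred_eq]
        split_ifs <;> norm_num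
      rw [this, integral_sub (integrable_const _) ((integrable_const _).indicator hm),
        integral_indicator_const _ hm]
      simp [div_eq_mul_inv]
    rw [this]
    apply ENNReal.ofReal_le_ofReal
    linarith [Real.add_one_le_exp (-(q/2))]
  simp only [e]
  rw [ProbabilityTheory.lintegral_prod_eq_prod_lintegral_of_indepFun Finset.univ
    (fun k (x : Fin n → Fin d → ℝ) => w (x k))
    (ProbabilityTheory.iIndepFun_pi (fun _ => hw.aemeasurable))
    (fun k => hw.comp (measurable_pi_apply k))]
  have : ∀ k : Fin n, ∫⁻ x, w (x k) ∂(Measure.pi (fun _ : Fin n => μ)) = ∫⁻ z, w z ∂μ := fun k =>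
    (measurePreserving_eval (fun _ : Fin n => μ) k).lintegral_comp hw
  simp only [this, Finset.prod_const, Finset.card_univ, Fintype.card_fin]
  rw [mul_comm, Real.exp_nat_mul, ENNReal.ofReal_pow (Real.exp_pos _).le]
  gcongr

lemma aux_main {d : ℕ} (hd : 1 ≤ d) (μ : Measure (Fin d → ℝ)) [IsProbabilityMeasure μ]
    (hs : IsSymmMeasure μ) (M a₀ : ℝ) (hM : 0 < M) (ha0 : 0 < a₀)
    (ha : ENNReal.ofReal a₀ ≤ μ (box M 0)ᶜ) (n : ℕ) (hn : 1 ≤ n) (y : Fin d → ℝ) :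
    stepIter μ n (box M y) ≤ ENNReal.ofReal ((1 / Real.sqrt (a₀/d/4*n))^d +
      d * Real.exp (-(a₀/d/4*n))) := by
  have hd' : (0:ℝ) < d := by exact_mod_cast hd
  have hn' : (0:ℝ) < n := by exact_mod_cast hn
  set r : ℝ := a₀/d/4*n with hr
  have hrpos : 0 < r := by positivity
  have h2 : ((2:ℝ≥0∞)^n)^d ≠ 0 := by positivity
  have h2' : ((2:ℝ≥0∞)^n)^d ≠ ⊤ := by finiteness
  have hofr : ((2:ℝ≥0∞)^n)^d = ENNReal.ofReal (((2:ℝ)^n)^d) := by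
    rw [ENNReal.ofReal_pow (by positivity), ENNReal.ofReal_pow (by positivity)]; simp
  rw [← ENNReal.mul_le_mul_iff_right h2 h2', aux_avg μ hs]
  have hpt : ∀ x : Fin n → Fin d → ℝ, ((∏ i, NN (fun k => x k i) M (y i) : ℕ) : ℝ≥0∞) ≤
      ((2:ℝ≥0∞)^n)^d * (ENNReal.ofReal ((1 / Real.sqrt r)^d) +
        ∑ i, ENNReal.ofReal (Real.exp r) * ENNReal.ofReal ((1/2)^(mm (fun k => x k i) M))) := by
    intro x
    have h := aux_point x M hM y r hrpos
    rw [Finset.prod_div_distrib, Finset.prod_const, Finset.card_univ, Fintype.card_fin,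
      div_le_iff₀ (by positivity), mul_comm] at h
    have h' := ENNReal.ofReal_le_ofReal h
    rw [ENNReal.ofReal_mul (by positivity), ← hofr, ENNReal.ofReal_add (by positivity)
      (by positivity), ENNReal.ofReal_sum_of_nonneg (fun i _ => by positivity)] at h'
    simp only [ENNReal.ofReal_mul (Real.exp_pos r).le] at h'
    rw [← Nat.cast_prod, ENNReal.ofReal_natCast] at h'
    exact h'
  have hmeas : ∀ i : Fin d, Measurable (fun x : Fin n → Fin d → ℝ =>
      ENNReal.ofReal ((1/2)^(mm (fun k => x k i) M))) := by
    intro i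
    have : ∀ x : Fin n → Fin d → ℝ, ((1/2:ℝ)^(mm (fun k => x k i) M)) =
      ∏ k, (if M < |x k i| then 1/2 else 1) := by
      intro x; simp [mm, Finset.prod_ite]
    simp only [this]
    refine ENNReal.measurable_ofReal.comp (Finset.measurable_prod _ fun k _ => ?_)
    exact Measurable.ite (measurableSet_lt measurable_const (by fun_prop)) measurable_const
      measurable_const
  refine (lintegral_mono hpt).trans ?_
  rw [lintegral_const_mul' _ _ h2', lintegral_add_left measurable_const, lintegral_const,
    measure_univ, mul_one, lintegral_finsetSum _ (fun i _ => (hmeas i).const_mul _)]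
  gcongr
  rw [ENNReal.ofReal_add (by positivity) (by positivity)]
  gcongr
  have hi : ∀ i : Fin d, ∫⁻ x, ENNReal.ofReal (Real.exp r) *
      ENNReal.ofReal ((1/2)^(mm (fun k => x k i) M)) ∂(Measure.pi (fun _ : Fin n => μ)) ≤
      ENNReal.ofReal (Real.exp (-r)) := by
    intro i
    rw [lintegral_const_mul _ (hmeas i)]
    calc _ ≤ ENNReal.ofReal (Real.exp r) * ENNReal.ofReal (Real.exp (-(a₀/d/2) * n)) := by
          gcongr; exact aux_exp μ M _ n i (aux_p hd μ hs M a₀ ha i)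
      _ = _ := by
          rw [← ENNReal.ofReal_mul (Real.exp_pos _).le, ← Real.exp_add]
          congr 2; rw [hr]; ring
  refine (Finset.sum_le_sum (fun i _ => hi i)).trans ?_
  rw [ENNReal.ofReal_mul (by positivity)]
  simp

/-- Esseen-type anti-concentration for symmetric random walks
(`cor: coro of esseen`). -/
theorem statement6 (d : ℕ) (hd : 1 ≤ d) (a₀ : ℝ) (ha₀ : 0 < a₀) :
    ∃ C > (0:ℝ), ∀ W : SymmRW d, ∀ M : ℝ, 1 ≤ M →
      ENNReal.ofReal a₀ ≤ W.μ (box M 0)ᶜ →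
      ∀ n : ℕ, 1 ≤ n → ∀ y : Fin d → ℝ,
        stepIter W.μ n (box M y) ≤ ENNReal.ofReal (C / (n:ℝ) ^ ((d:ℝ)/2)) := by
  have hd' : (0:ℝ) < d := by exact_mod_cast hd
  set δ : ℝ := a₀/d/4 with hδ
  have hδ0 : 0 < δ := by positivity
  refine ⟨(1 / Real.sqrt δ)^d + d * (d.factorial / δ^d), by positivity, ?_⟩
  intro W M hM ha n hn y
  have := W.prob
  have hn1 : (1:ℝ) ≤ n := by exact_mod_cast hn
  have hn' : (0:ℝ) < n := by linarith
  refine (aux_main hd W.μ W.symm M a₀ (by linarith) ha₀ ha n hn y).trans ?_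
  apply ENNReal.ofReal_le_ofReal
  rw [← hδ]
  have e : (n:ℝ) ^ ((d:ℝ)/2) = Real.sqrt n ^ d := by
    rw [Real.sqrt_eq_rpow, ← Real.rpow_natCast, ← Real.rpow_mul hn'.le]
    congr 1; ring
  rw [e, add_div]
  have hsn : 0 < Real.sqrt n := Real.sqrt_pos.2 hn'
  refine add_le_add (le_of_eq ?_) ?_
  · rw [Real.sqrt_mul hδ0.le, div_pow, div_pow, mul_pow, one_pow, div_div]
  · rw [mul_div_assoc]
    refine mul_le_mul_of_nonneg_left ?_ hd'.le
    have h := Real.pow_div_factorial_le_exp (δ * n) (by positivity) d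
    have hsq : Real.sqrt n ^ d ≤ (n:ℝ)^d := by
      gcongr
      rw [Real.sqrt_le_left hn'.le]
      nlinarith
    rw [Real.exp_neg, div_div, inv_le_comm₀ (Real.exp_pos _) (by positivity), inv_div]
    refine le_trans ?_ h
    rw [mul_pow]
    gcongr
end
end

section
/- Let d > 2 be an integer and c₀ ∈ (0,1]. There exist constants c, C > 0 depending only on (d, c₀) (and not on J) such that for every admissible kernel J on ℤ^d with constant c₀, every β ∈ [0,1], every integer m ≥ 1, and every x ∈ ℤ^d: (i) P_J[X_m = x] ≤ (C/σ_J^d)·(1/m^{d/2})·exp(−c·|x|/(σ_J·√m)); and (ii) ℂ_β(x) ≤ δ_0(x) + (C/σ_J^d)·(σ_J/(σ_J∨|x|))^{d−2}·exp(−c·√(1−β)·|x|/σ_J). -/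
open scoped ENNReal

noncomputable section

namespace Blackbox

/-- Supremum norm of a lattice point. -/
def supNorm {d : ℕ} (x : Fin d → ℤ) : ℝ :=
  ((Finset.univ.sup fun i => (x i).natAbs : ℕ) : ℝ)

/-- Squared Euclidean norm of a lattice point. -/
def sqNorm {d : ℕ} (x : Fin d → ℤ) : ℝ :=
  ∑ i, ((x i : ℝ)) ^ 2

/-- Invariance under coordinate permutations and sign flips of individual coordinates. -/
def IsSymmFun {d : ℕ} {α : Type*} (f : (Fin d → ℤ) → α) : Prop :=
  ∀ (π : Equiv.Perm (Fin d)) (e : Fin d → Bool) (x : Fin d → ℤ),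
    f (fun i => (if e i then -1 else 1) * x (π i)) = f x

/-- An admissible kernel on `ℤ^d` with constant `c₀`. -/
structure AdmissibleKernel (d : ℕ) (c₀ : ℝ) where
  J : (Fin d → ℤ) → ℝ
  nonneg : ∀ x, 0 ≤ J x
  zero_at_zero : J 0 = 0
  summable : Summable J
  norm_one : ∑' x, J x = 1
  symm : IsSymmFun J
  R : ℝ
  R_ge_one : 1 ≤ R
  range_le : ∀ x, 0 < J x → supNorm x ≤ R
  range_attained : ∃ x, 0 < J x ∧ supNorm x = R
  summable_sq : Summable fun x => sqNorm x * J x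
  sigma_lower : c₀ * R ≤ Real.sqrt (∑' x, sqNorm x * J x)
  J_upper : ∀ x, J x ≤ c₀⁻¹ / R ^ d

/-- `σ_J`, the square root of the variance of the kernel. -/
def AdmissibleKernel.sigma {d : ℕ} {c₀ : ℝ} (K : AdmissibleKernel d c₀) : ℝ :=
  Real.sqrt (∑' x, sqNorm x * K.J x)

/-- `P_J[X_m = x]`: the `m`-step distribution of the random walk with step kernel `J`. -/
def latIter {d : ℕ} (J : (Fin d → ℤ) → ℝ) : ℕ → (Fin d → ℤ) → ℝ
  | 0 => fun x => if x = 0 then 1 else 0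
  | n + 1 => fun x => ∑' y, J y * latIter J n (x - y)

/-- The massive lattice Green function `ℂ_β(x) = ∑_{m ≥ 0} β^m P_J[X_m = x]`. -/
def latGreen {d : ℕ} (J : (Fin d → ℤ) → ℝ) (β : ℝ) (x : Fin d → ℤ) : ℝ≥0∞ :=
  ∑' m : ℕ, ENNReal.ofReal (β ^ m * latIter J m x)

end Blackbox

open Blackbox

namespace Blackbox
section
open Finset

lemma int_cos_aux (n : ℤ) : ∫ θ in (0:ℝ)..1, Real.cos (4 * Real.pi * n * θ) = if n = 0 then 1 else 0 := by
  by_cases h : n = 0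
  · simp [h]
  · rw [if_neg h]
    have hn : (n:ℝ) ≠ 0 := by exact_mod_cast h
    have hc : (4 * Real.pi * n : ℝ) ≠ 0 := by positivity
    rw [intervalIntegral.integral_comp_mul_left (fun u => Real.cos u) hc, integral_cos]
    have : Real.sin (4 * Real.pi * n * 1) = 0 := by
      have := Real.sin_int_mul_pi (4 * n)
      rw [← this]; push_cast; ring_nf
    rw [this]; simp

def phi {ι : Type*} (S : Finset ι) (p : ι → ℝ) (Y : ι → ℤ) (θ : ℝ) : ℝ :=
  ∑ x ∈ S, p x * Real.sin (2 * Real.pi * Y x * θ) ^ 2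

def gg {ι : Type*} (S : Finset ι) (p : ι → ℝ) (Y : ι → ℤ) (θ : ℝ) : ℝ :=
  ∑ x ∈ S, p x * Real.cos (4 * Real.pi * Y x * θ)

section oneD
variable {ι : Type*} (S : Finset ι) (p : ι → ℝ) (Y : ι → ℤ)

lemma phi_cont : Continuous (phi S p Y) := by
  unfold phi; fun_prop

lemma gg_cont : Continuous (gg S p Y) := by
  unfold gg; fun_prop

lemma gg_eq (hs : ∑ x ∈ S, p x = 1) (θ : ℝ) : gg S p Y θ = 1 - 2 * phi S p Y θ := by
  unfold gg phi
  rw [← hs, mul_sum, ← sum_sub_distrib]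
  refine sum_congr rfl fun x _ => ?_
  have : (4 * Real.pi * Y x * θ) = 2 * (2 * Real.pi * Y x * θ) := by ring
  rw [this, Real.cos_two_mul, Real.cos_sq']; ring

lemma phi_nonneg (hp : ∀ x, 0 ≤ p x) (θ : ℝ) : 0 ≤ phi S p Y θ :=
  sum_nonneg fun x _ => mul_nonneg (hp x) (sq_nonneg _)

lemma sin_sq_add_le (a b : ℝ) : Real.sin (a + b) ^ 2 ≤ 2 * Real.sin a ^ 2 + 2 * Real.sin b ^ 2 := by
  rw [Real.sin_add]
  have h1 := Real.sin_sq_add_cos_sq a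
  have h2 := Real.sin_sq_add_cos_sq b
  have h3 : (Real.sin a * Real.cos b) ^ 2 ≤ Real.sin a ^ 2 := by
    rw [mul_pow]; nlinarith [sq_nonneg (Real.sin a), sq_nonneg (Real.sin b), mul_nonneg (sq_nonneg (Real.sin a)) (sq_nonneg (Real.sin b))]
  have h4 : (Real.cos a * Real.sin b) ^ 2 ≤ Real.sin b ^ 2 := by
    rw [mul_pow]; nlinarith [sq_nonneg (Real.sin a), sq_nonneg (Real.sin b), mul_nonneg (sq_nonneg (Real.sin a)) (sq_nonneg (Real.sin b))]
  nlinarith [sq_nonneg (Real.sin a * Real.cos b - Real.cos a * Real.sin b)]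

lemma phi_add (hp : ∀ x, 0 ≤ p x) (a b : ℝ) :
    phi S p Y (a + b) ≤ 2 * phi S p Y a + 2 * phi S p Y b := by
  unfold phi
  rw [mul_sum, mul_sum, ← sum_add_distrib]
  refine sum_le_sum fun x _ => ?_
  have := sin_sq_add_le (2 * Real.pi * Y x * a) (2 * Real.pi * Y x * b)
  rw [mul_add]
  nlinarith [mul_le_mul_of_nonneg_left this (hp x)]

lemma phi_neg (a : ℝ) : phi S p Y (-a) = phi S p Y a := by
  unfold phi; simp

lemma phi_upper (hp : ∀ x, 0 ≤ p x) (hs : ∑ x ∈ S, p x = 1) (r : ℕ)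
    (hY : ∀ x ∈ S, |(Y x : ℝ)| ≤ r) (s : ℝ) :
    phi S p Y s ≤ (2 * Real.pi * r * s) ^ 2 := by
  unfold phi
  calc _ ≤ ∑ x ∈ S, p x * (2 * Real.pi * r * s) ^ 2 := by
        refine sum_le_sum fun x hx => mul_le_mul_of_nonneg_left ?_ (hp x)
        have h1 : Real.sin (2 * Real.pi * Y x * s) ^ 2 ≤ (2 * Real.pi * Y x * s) ^ 2 :=
          sq_le_sq.2 Real.abs_sin_le_abs
        refine h1.trans (sq_le_sq.2 ?_)
        rw [abs_mul, abs_mul, abs_mul (2 * Real.pi * (r:ℝ)), abs_mul _ (r:ℝ)]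
        have := hY x hx
        rw [Nat.abs_cast]
        gcongr
    _ = _ := by rw [← sum_mul, hs, one_mul]

lemma sin_sq_lower (u : ℝ) (h : |u| ≤ Real.pi / 2) : (2 / Real.pi * u) ^ 2 ≤ Real.sin u ^ 2 := by
  have := Real.mul_abs_le_abs_sin h
  have hpi := Real.pi_pos
  apply sq_le_sq.2
  rw [abs_mul, abs_of_pos (by positivity : 0 < 2 / Real.pi)]
  exact this

lemma phi_lower (hp : ∀ x, 0 ≤ p x) (r : ℕ) 
    (hY : ∀ x ∈ S, |(Y x : ℝ)| ≤ r) (κ : ℝ) (hv : κ * r ^ 2 ≤ ∑ x ∈ S, p x * (Y x : ℝ) ^ 2) (s : ℝ)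
    (hs : r * |s| ≤ 1 / 4) :
    16 * κ * r ^ 2 * s ^ 2 ≤ phi S p Y s := by
  calc 16 * κ * r ^ 2 * s ^ 2 = (16 * s ^ 2) * (κ * r ^ 2) := by ring
    _ ≤ (16 * s ^ 2) * ∑ x ∈ S, p x * (Y x : ℝ) ^ 2 := by gcongr
    _ ≤ _ := by
      unfold phi
      rw [mul_sum]
      refine sum_le_sum fun x hx => ?_
      have h1 : |2 * Real.pi * Y x * s| ≤ Real.pi / 2 := by
        rw [abs_mul, abs_mul, abs_of_pos (by positivity : 0 < 2 * Real.pi)]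
        have : |(Y x:ℝ)| * |s| ≤ r * |s| := by gcongr; exact hY x hx
        nlinarith [Real.pi_pos]
      have h2 := sin_sq_lower _ h1
      have h3 : (2 / Real.pi * (2 * Real.pi * Y x * s)) ^ 2 = 16 * s ^ 2 * (Y x : ℝ) ^ 2 := by
        have := Real.pi_ne_zero
        field_simp; ring
      rw [h3] at h2
      nlinarith [mul_le_mul_of_nonneg_left h2 (hp x)]

lemma gg_parseval (hp : ∀ x, 0 ≤ p x) (hs : ∑ x ∈ S, p x = 1) (q : ℝ)
    (hq : ∀ y : ℤ, (∑ x ∈ S, if Y x = y then p x else 0) ≤ q) :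
    ∫ θ in (0:ℝ)..1, gg S p Y θ ^ 2 ≤ q := by
  have h1 : ∀ θ, gg S p Y θ ^ 2 = ∑ x ∈ S, ∑ x' ∈ S, p x * p x' / 2 *
      (Real.cos (4 * Real.pi * ((Y x - Y x' : ℤ) : ℝ) * θ) + Real.cos (4 * Real.pi * ((Y x + Y x' : ℤ) : ℝ) * θ)) := by
    intro θ
    unfold gg
    rw [sq, sum_mul_sum]
    refine sum_congr rfl fun x _ => sum_congr rfl fun x' _ => ?_
    have e1 : 4 * Real.pi * ((Y x - Y x' : ℤ) : ℝ) * θ = 4 * Real.pi * Y x * θ - 4 * Real.pi * Y x' * θ := by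
      push_cast; ring
    have e2 : 4 * Real.pi * ((Y x + Y x' : ℤ) : ℝ) * θ = 4 * Real.pi * Y x * θ + 4 * Real.pi * Y x' * θ := by
      push_cast; ring
    rw [e1, e2, Real.cos_sub, Real.cos_add]; ring
  simp_rw [h1]
  have hI : ∀ n : ℤ, IntervalIntegrable (fun θ : ℝ => Real.cos (4 * Real.pi * (n:ℝ) * θ)) MeasureTheory.volume 0 1 :=
    fun n => Continuous.intervalIntegrable (by fun_prop) _ _
  rw [intervalIntegral.integral_finsetSum]
  · calc _ = ∑ x ∈ S, ∑ x' ∈ S, p x * p x' / 2 * ((if Y x - Y x' = 0 then 1 else 0) + (if Y x + Y x' = 0 then 1 else 0)) := by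
          refine sum_congr rfl fun x _ => ?_
          rw [intervalIntegral.integral_finsetSum]
          · refine sum_congr rfl fun x' _ => ?_
            rw [intervalIntegral.integral_const_mul, intervalIntegral.integral_add (hI _) (hI _),
              int_cos_aux, int_cos_aux]
          · intro i _
            exact Continuous.intervalIntegrable (by fun_prop) _ _
      _ ≤ ∑ x ∈ S, p x * q := by
          refine sum_le_sum fun x _ => ?_
          have a1 := hq (Y x)
          have a2 := hq (- Y x)
          have : ∑ x' ∈ S, p x * p x' / 2 * ((if Y x - Y x' = 0 then 1 else 0) + (if Y x + Y x' = 0 then 1 else 0))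
            = p x / 2 * ((∑ x' ∈ S, if Y x' = Y x then p x' else 0) + ∑ x' ∈ S, if Y x' = - Y x then p x' else 0) := by
            rw [← sum_add_distrib, mul_sum]
            refine sum_congr rfl fun x' _ => ?_
            have i1 : (Y x - Y x' = 0) ↔ (Y x' = Y x) := by omega
            have i2 : (Y x + Y x' = 0) ↔ (Y x' = - Y x) := by omega
            simp only [i1, i2]
            split_ifs <;> ring
          rw [this]
          nlinarith [hp x]
      _ = q := by rw [← sum_mul, hs, one_mul]
  · intro i _
    exact Continuous.intervalIntegrable (by fun_prop) _ _

lemma gauss_Icc (b θ0 u v : ℝ) (hb : 0 < b) (huv : u ≤ v) :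
    ∫ θ in u..v, Real.exp (-b * (θ - θ0) ^ 2) ≤ √(Real.pi / b) := by
  rw [← integral_gaussian b, ← MeasureTheory.integral_sub_right_eq_self (fun x => Real.exp (-b * x ^ 2)) θ0]
  rw [intervalIntegral.integral_of_le huv]
  apply MeasureTheory.setIntegral_le_integral
  · exact (integrable_exp_neg_mul_sq hb).comp_sub_right θ0
  · exact Filter.Eventually.of_forall fun x => (Real.exp_pos _).le

def C1 (a κ : ℝ) : ℝ := 320 * √(Real.pi / (a * κ)) + 2 * √(8 / a)

lemma exp_sqrt_bd (z : ℝ) (hz : 0 < z) : Real.exp (-z) ≤ 1 / √z := by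
  rw [Real.exp_neg, ← one_div]
  apply one_div_le_one_div_of_le (Real.sqrt_pos.2 hz)
  have := Real.add_one_le_exp z
  refine le_trans ?_ this
  rw [Real.sqrt_le_left (by positivity)]
  nlinarith

lemma oneD_piece (hp : ∀ x, 0 ≤ p x) (hs : ∑ x ∈ S, p x = 1) (r : ℕ) (hr : 1 ≤ r)
    (hY : ∀ x ∈ S, |(Y x : ℝ)| ≤ r) (κ : ℝ) (hκ : 0 < κ)
    (hv : κ * r ^ 2 ≤ ∑ x ∈ S, p x * (Y x : ℝ) ^ 2) (a : ℝ) (ha : 0 < a) (m : ℕ) (hm : 1 ≤ m)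
    (u v : ℝ) (huv : v - u = 1 / (64 * r)) :
    ∫ θ in u..v, 2 * gg S p Y θ ^ 2 * Real.exp (-(a * m * phi S p Y θ)) ≤
      C1 a κ / √m * ∫ θ in u..v, gg S p Y θ ^ 2 := by
  have hr' : (1:ℝ) ≤ r := by exact_mod_cast hr
  have hm' : (1:ℝ) ≤ m := by exact_mod_cast hm
  have hsm : 0 < √(m:ℝ) := Real.sqrt_pos.2 (by positivity)
  have huv' : u ≤ v := by
    have : (0:ℝ) ≤ 1 / (64 * r) := by positivity
    linarith
  have hg := gg_cont S p Y
  have hf := phi_cont S p Y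
  have hC1 : 0 ≤ 320 * √(Real.pi / (a * κ)) := by positivity
  have hC2 : 0 ≤ 2 * √(8 / a) := by positivity
  have hgi : 0 ≤ ∫ θ in u..v, gg S p Y θ ^ 2 :=
    intervalIntegral.integral_nonneg huv' fun _ _ => sq_nonneg _
  by_cases hA : ∃ θ ∈ Set.Icc u v, phi S p Y θ ≤ 1 / 8
  · obtain ⟨θ1, h1, h1'⟩ := hA
    obtain ⟨θ0, h0, hmin⟩ := (isCompact_Icc (a := u) (b := v)).exists_isMinOn ⟨θ1, h1⟩ hf.continuousOn
    have hsmall : ∀ s t, s ∈ Set.Icc u v → t ∈ Set.Icc u v → r * |s - t| ≤ 1 / 64 := by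
      intro s t hs ht
      have : |s - t| ≤ 1 / (64 * r) := by
        rw [← huv, abs_le]; constructor <;> linarith [hs.1, hs.2, ht.1, ht.2]
      calc _ ≤ r * (1 / (64 * r) : ℝ) := by gcongr
        _ = 1 / 64 := by field_simp
    have hlow : ∀ θ ∈ Set.Icc u v, 4 * κ * r ^ 2 * (θ - θ0) ^ 2 ≤ phi S p Y θ := by
      intro θ hθ
      have e1 := phi_lower S p Y hp r hY κ hv (θ - θ0) ((hsmall _ _ hθ h0).trans (by norm_num))
      have e2 := phi_add S p Y hp θ (-θ0)
      rw [phi_neg, ← sub_eq_add_neg] at e2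
      have e3 : phi S p Y θ0 ≤ phi S p Y θ := hmin hθ
      linarith
    have hggl : ∀ θ ∈ Set.Icc u v, 1 / 5 ≤ gg S p Y θ ^ 2 := by
      intro θ hθ
      have e1 := phi_upper S p Y hp hs r hY (θ - θ1)
      have e2 := phi_add S p Y hp (θ - θ1) θ1
      rw [sub_add_cancel] at e2
      have e3 := hsmall _ _ hθ h1
      have e4 : (2 * Real.pi * r * (θ - θ1)) ^ 2 ≤ 1 / 100 := by
        have : |2 * Real.pi * r * (θ - θ1)| ≤ 1 / 10 := by
          rw [abs_mul, abs_mul, abs_of_pos (by positivity : 0 < 2 * Real.pi), Nat.abs_cast, mul_assoc]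
          have := Real.pi_lt_d2
          nlinarith [Real.pi_pos, abs_nonneg (θ - θ1)]
        calc _ = |2 * Real.pi * r * (θ - θ1)| ^ 2 := (sq_abs _).symm
          _ ≤ (1 / 10) ^ 2 := by gcongr
          _ = _ := by norm_num
      have e5 : 0.46 ≤ gg S p Y θ := by
        rw [gg_eq S p Y hs]; norm_num at *; linarith
      norm_num at *; nlinarith
    have L1 : ∫ θ in u..v, 2 * gg S p Y θ ^ 2 * Real.exp (-(a * m * phi S p Y θ)) ≤
        ∫ θ in u..v, 2 * Real.exp (-(4 * a * m * κ * r ^ 2) * (θ - θ0) ^ 2) := by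
      apply intervalIntegral.integral_mono_on huv'
      · exact Continuous.intervalIntegrable (by fun_prop) _ _
      · exact Continuous.intervalIntegrable (by fun_prop) _ _
      intro θ hθ
      have b1 : gg S p Y θ ^ 2 ≤ 1 := by
        have c1 : |gg S p Y θ| ≤ 1 := by
          unfold gg
          calc _ ≤ ∑ x ∈ S, |p x * Real.cos (4 * Real.pi * Y x * θ)| := abs_sum_le_sum_abs _ _
            _ ≤ ∑ x ∈ S, p x := by
              refine sum_le_sum fun x _ => ?_
              rw [abs_mul, abs_of_nonneg (hp x)]
              exact mul_le_of_le_one_right (hp x) (Real.abs_cos_le_one _)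
            _ = 1 := hs
        rw [← sq_abs]; exact pow_le_one₀ (abs_nonneg _) c1
      have b2 : Real.exp (-(a * m * phi S p Y θ)) ≤ Real.exp (-(4 * a * m * κ * r ^ 2) * (θ - θ0) ^ 2) := by
        apply Real.exp_le_exp.2
        have := mul_le_mul_of_nonneg_left (hlow θ hθ) (by positivity : 0 ≤ a * m)
        linarith
      calc _ ≤ 2 * 1 * Real.exp (-(4 * a * m * κ * r ^ 2) * (θ - θ0) ^ 2) := by gcongr
        _ = _ := by ring
    rw [intervalIntegral.integral_const_mul] at L1
    have L2 := gauss_Icc (4 * a * m * κ * r ^ 2) θ0 u v (by positivity) huv'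
    have L3 : √(Real.pi / (4 * a * m * κ * r ^ 2)) = √(Real.pi / (a * κ)) / (2 * r * √m) := by
      rw [show Real.pi / (4 * a * m * κ * r ^ 2) = (Real.pi / (a * κ)) / ((2 * r) ^ 2 * m) by field_simp; ring]
      rw [Real.sqrt_div (by positivity), Real.sqrt_mul (by positivity), Real.sqrt_sq (by positivity)]
    have L4 : 1 / (320 * r) ≤ ∫ θ in u..v, gg S p Y θ ^ 2 := by
      calc (1 / (320 * r) : ℝ) = ∫ θ in u..v, (1/5 : ℝ) := by
            rw [intervalIntegral.integral_const, huv, smul_eq_mul]; field_simp; norm_num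
        _ ≤ _ := by
          apply intervalIntegral.integral_mono_on huv'
          · exact Continuous.intervalIntegrable (by fun_prop) _ _
          · exact Continuous.intervalIntegrable (by fun_prop) _ _
          exact hggl
    calc _ ≤ 2 * (√(Real.pi / (a * κ)) / (2 * r * √m)) := by rw [← L3]; linarith
      _ = (320 * √(Real.pi / (a * κ))) / √m * (1 / (320 * r)) := by field_simp
      _ ≤ (320 * √(Real.pi / (a * κ))) / √m * ∫ θ in u..v, gg S p Y θ ^ 2 := by gcongr
      _ ≤ _ := by unfold C1; gcongr; linarith
  · push Not at hA
    have L1 : ∫ θ in u..v, 2 * gg S p Y θ ^ 2 * Real.exp (-(a * m * phi S p Y θ)) ≤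
        ∫ θ in u..v, 2 * √(8 / a) / √m * gg S p Y θ ^ 2 := by
      apply intervalIntegral.integral_mono_on huv'
      · exact Continuous.intervalIntegrable (by fun_prop) _ _
      · exact Continuous.intervalIntegrable (by fun_prop) _ _
      intro θ hθ
      have b2 : Real.exp (-(a * m * phi S p Y θ)) ≤ √(8 / a) / √m := by
        calc _ ≤ Real.exp (-(a * m / 8)) := by
              apply Real.exp_le_exp.2
              have := mul_le_mul_of_nonneg_left (hA θ hθ).le (by positivity : 0 ≤ a * m)
              linarith
          _ ≤ 1 / √(a * m / 8) := exp_sqrt_bd _ (by positivity)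
          _ = _ := by
            rw [show a * m / 8 = m / (8 / a) by field_simp, Real.sqrt_div (by positivity)]
            have : 0 < √(8/a) := Real.sqrt_pos.2 (by positivity)
            field_simp
      calc _ ≤ 2 * gg S p Y θ ^ 2 * (√(8 / a) / √m) := by gcongr
        _ = _ := by ring
    rw [intervalIntegral.integral_const_mul] at L1
    refine L1.trans ?_
    unfold C1
    gcongr
    linarith

lemma oneD (hp : ∀ x, 0 ≤ p x) (hs : ∑ x ∈ S, p x = 1) (r : ℕ) (hr : 1 ≤ r)
    (hY : ∀ x ∈ S, |(Y x : ℝ)| ≤ r) (κ : ℝ) (hκ : 0 < κ)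
    (hv : κ * r ^ 2 ≤ ∑ x ∈ S, p x * (Y x : ℝ) ^ 2) (q : ℝ)
    (hq : ∀ y : ℤ, (∑ x ∈ S, if Y x = y then p x else 0) ≤ q) (a : ℝ) (ha : 0 < a) (m : ℕ) (hm : 1 ≤ m) :
    ∫ θ in (0:ℝ)..1, 2 * gg S p Y θ ^ 2 * Real.exp (-(a * m * phi S p Y θ)) ≤
      C1 a κ / √m * q := by
  have hg := gg_cont S p Y
  have hf := phi_cont S p Y
  have hr' : (1:ℝ) ≤ r := by exact_mod_cast hr
  have hC : 0 ≤ C1 a κ / √m := by unfold C1; positivity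
  have key : ∀ f : ℝ → ℝ, Continuous f → ∫ θ in (0:ℝ)..1, f θ =
      ∑ k ∈ range (64 * r), ∫ θ in ((k:ℝ) / (64 * r))..(((k + 1 : ℕ) : ℝ) / (64 * r)), f θ := by
    intro f hf
    rw [intervalIntegral.sum_integral_adjacent_intervals (a := fun k : ℕ => (k:ℝ) / (64 * r))]
    · congr 1
      · simp
      · push_cast; field_simp
    · intro k _; exact hf.intervalIntegrable _ _
  refine le_trans ?_ (mul_le_mul_of_nonneg_left (gg_parseval S p Y hp hs q hq) hC)
  rw [key _ (by fun_prop), key _ (by fun_prop), mul_sum]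
  refine sum_le_sum fun k _ => ?_
  apply oneD_piece S p Y hp hs r hr hY κ hκ hv a ha m hm
  push_cast; field_simp; ring

end oneD
end
end Blackbox

namespace Blackbox
section
open Finset

def bx (d r : ℕ) : Finset (Fin d → ℤ) := Fintype.piFinset fun _ => Icc (-(r:ℤ)) r

lemma mem_bx {d r : ℕ} {x : Fin d → ℤ} : x ∈ bx d r ↔ ∀ i, |x i| ≤ r := by
  simp [bx, Fintype.mem_piFinset, abs_le]

structure Ker (d r : ℕ) (J : (Fin d → ℤ) → ℝ) (b κ : ℝ) : Prop where
  hr : 1 ≤ r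
  hb : 0 < b
  hκ : 0 < κ
  nonneg : ∀ x, 0 ≤ J x
  supp : ∀ x, x ∉ bx d r → J x = 0
  sum_one : ∑ x ∈ bx d r, J x = 1
  flip : ∀ i x, J (Function.update x i (-x i)) = J x
  bound : ∀ x, J x ≤ b / (r:ℝ) ^ d
  var : ∀ i, κ * (r:ℝ) ^ 2 ≤ ∑ x ∈ bx d r, J x * (x i : ℝ) ^ 2

lemma flip_invol {d : ℕ} (i : Fin d) (x : Fin d → ℤ) :
    Function.update (Function.update x i (-x i)) i (-(Function.update x i (-x i)) i) = x := by
  simp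

lemma flip_mem {d r : ℕ} (i : Fin d) {x : Fin d → ℤ} (h : x ∈ bx d r) :
    Function.update x i (-x i) ∈ bx d r := by
  rw [mem_bx] at *
  intro j
  by_cases hj : j = i
  · subst hj; simpa using h j
  · simpa [hj] using h j

lemma sum_flip {d r : ℕ} {M : Type*} [AddCommMonoid M] (i : Fin d) (f : (Fin d → ℤ) → M) :
    ∑ x ∈ bx d r, f (Function.update x i (-x i)) = ∑ x ∈ bx d r, f x := by
  refine Finset.sum_nbij' (fun x => Function.update x i (-x i)) (fun x => Function.update x i (-x i)) ?_ ?_ ?_ ?_ ?_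
  · intro x hx; exact flip_mem i hx
  · intro x hx; exact flip_mem i hx
  · intro x _; exact flip_invol i x
  · intro x _; exact flip_invol i x
  · intro x _; rfl

def ee (t : ℝ) (n : ℤ) : ℂ := Complex.exp ((2 * Real.pi * n * t : ℝ) * Complex.I)

lemma ee_norm (t : ℝ) (n : ℤ) : ‖ee t n‖ = 1 := Complex.norm_exp_ofReal_mul_I _

lemma ee_add (t : ℝ) (n m : ℤ) : ee t (n + m) = ee t n * ee t m := by
  unfold ee; rw [← Complex.exp_add]; congr 1; push_cast; ring

lemma ee_zero (t : ℝ) : ee t 0 = 1 := by simp [ee]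

lemma ee_cont (n : ℤ) : Continuous fun t => ee t n := by unfold ee; fun_prop

lemma ee_conj (t : ℝ) (n : ℤ) : (starRingEnd ℂ) (ee t n) = ee t (-n) := by
  unfold ee
  rw [← Complex.exp_conj, map_mul, Complex.conj_ofReal, Complex.conj_I]; congr 1; push_cast; ring

lemma ee_avg (t : ℝ) (n : ℤ) : ee t n + ee t (-n) = ((2 * Real.cos (2 * Real.pi * n * t) : ℝ) : ℂ) := by
  rw [← ee_conj, Complex.add_conj]
  unfold ee
  rw [Complex.exp_ofReal_mul_I_re]

lemma ee_int (n : ℤ) : ∫ t in Set.Ioc (0:ℝ) 1, ee t n = if n = 0 then 1 else 0 := by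
  rw [← intervalIntegral.integral_of_le zero_le_one]
  by_cases h : n = 0
  · simp [h, ee_zero]
  · rw [if_neg h]
    have hc : (2 * Real.pi * n * Complex.I : ℂ) ≠ 0 := by
      simp [h, Real.pi_ne_zero]
    have : ∀ t : ℝ, ee t n = Complex.exp ((2 * Real.pi * n * Complex.I : ℂ) * t) := by
      intro t; unfold ee; congr 1; push_cast; ring
    simp_rw [this]
    rw [integral_exp_mul_complex hc]
    have h2 : Complex.exp ((2 * Real.pi * n * Complex.I : ℂ) * (1:ℝ)) = 1 := by
      rw [Complex.exp_eq_one_iff]; exact ⟨n, by push_cast; ring⟩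
    rw [h2]; simp

def ch {d : ℕ} (k : Fin d → ℝ) (x : Fin d → ℤ) : ℂ := ∏ i, ee (k i) (x i)

lemma ch_norm {d : ℕ} (k : Fin d → ℝ) (x : Fin d → ℤ) : ‖ch k x‖ = 1 := by
  simp [ch, norm_prod, ee_norm]

lemma ch_add {d : ℕ} (k : Fin d → ℝ) (x y : Fin d → ℤ) : ch k (x + y) = ch k x * ch k y := by
  simp [ch, ee_add, prod_mul_distrib]

lemma ch_conj {d : ℕ} (k : Fin d → ℝ) (x : Fin d → ℤ) : (starRingEnd ℂ) (ch k x) = ch k (-x) := by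
  simp [ch, map_prod, ee_conj]

lemma ch_cont {d : ℕ} (x : Fin d → ℤ) : Continuous fun k : Fin d → ℝ => ch k x := by
  unfold ch
  exact continuous_finsetProd _ fun i _ => (ee_cont (x i)).comp (continuous_apply i)

def mu (d : ℕ) : MeasureTheory.Measure (Fin d → ℝ) :=
  MeasureTheory.Measure.pi fun _ => MeasureTheory.volume.restrict (Set.Ioc (0:ℝ) 1)

lemma mu_int {d : ℕ} {E : Type*} [NormedAddCommGroup E] {f : (Fin d → ℝ) → E} (hf : Continuous f) :
    MeasureTheory.Integrable f (mu d) := by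
  unfold mu
  rw [← MeasureTheory.Measure.restrict_pi_pi, ← MeasureTheory.volume_pi]
  have : MeasureTheory.IntegrableOn f (Set.pi Set.univ fun _ => Set.Icc (0:ℝ) 1) :=
    hf.continuousOn.integrableOn_compact (isCompact_univ_pi fun _ => isCompact_Icc)
  exact this.mono_set (Set.pi_mono fun _ _ => Set.Ioc_subset_Icc_self)

lemma ch_int {d : ℕ} (x : Fin d → ℤ) : ∫ k, ch k x ∂(mu d) = if x = 0 then 1 else 0 := by
  unfold ch mu
  rw [MeasureTheory.integral_fintype_prod_eq_prod (fun i t => ee t (x i))]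
  simp_rw [ee_int]
  split_ifs with h
  · simp [h]
  · obtain ⟨i, hi⟩ := Function.ne_iff.1 h
    exact prod_eq_zero (mem_univ i) (if_neg hi)

def hat {d : ℕ} (r : ℕ) (J : (Fin d → ℤ) → ℝ) (k : Fin d → ℝ) : ℂ :=
  ∑ y ∈ bx d r, (J y : ℂ) * ch k y

lemma hat_cont {d : ℕ} (r : ℕ) (J : (Fin d → ℤ) → ℝ) : Continuous (hat r J) := by
  unfold hat
  exact continuous_finsetSum _ fun y _ => continuous_const.mul (ch_cont y)

section
variable {d r : ℕ} {J : (Fin d → ℤ) → ℝ} {b κ : ℝ} 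

lemma Ker.latIter_succ (hK : Ker d r J b κ) (m : ℕ) (x : Fin d → ℤ) :
    latIter J (m + 1) x = ∑ y ∈ bx d r, J y * latIter J m (x - y) := by
  show (∑' y, J y * latIter J m (x - y)) = _
  apply tsum_eq_sum
  intro y hy
  rw [hK.supp y hy, zero_mul]

lemma Ker.latIter_one (hK : Ker d r J b κ) (x : Fin d → ℤ) :
    latIter J 1 x = J x := by
  rw [hK.latIter_succ 0]
  simp only [latIter, sub_eq_zero]
  simp only [mul_ite, mul_one, mul_zero, Finset.sum_ite_eq]
  split_ifs with h
  · rfl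
  · exact (hK.supp x h).symm

lemma Ker.latIter_nonneg (hK : Ker d r J b κ) (m : ℕ) (x : Fin d → ℤ) :
    0 ≤ latIter J m x := by
  induction m generalizing x with
  | zero => simp only [latIter]; split_ifs <;> norm_num
  | succ m ih =>
    rw [hK.latIter_succ]
    exact sum_nonneg fun y _ => mul_nonneg (hK.nonneg y) (ih _)

lemma Ker.inversion (hK : Ker d r J b κ) (m : ℕ) (x : Fin d → ℤ) :
    (latIter J m x : ℂ) = ∫ k, hat r J k ^ m * ch k (-x) ∂(mu d) := by
  induction m generalizing x with
  | zero =>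
    simp only [pow_zero, one_mul, ch_int, latIter, neg_eq_zero]
    split_ifs <;> simp
  | succ m ih =>
    rw [hK.latIter_succ]
    push_cast
    simp_rw [ih]
    have h1 : ∀ k, hat r J k ^ (m+1) * ch k (-x) = ∑ y ∈ bx d r, (J y : ℂ) * (hat r J k ^ m * ch k (-(x - y))) := by
      intro k
      rw [pow_succ]
      conv_lhs => rw [show hat r J k ^ m * hat r J k = hat r J k ^ m * ∑ y ∈ bx d r, (J y : ℂ) * ch k y from rfl]
      rw [mul_sum, sum_mul]
      refine sum_congr rfl fun y _ => ?_
      rw [show -(x - y) = y + -x by abel, ch_add]; ring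
    simp_rw [h1]
    rw [MeasureTheory.integral_finsetSum]
    · refine sum_congr rfl fun y _ => ?_
      rw [MeasureTheory.integral_const_mul]
    · intro y _
      exact mu_int (continuous_const.mul (((hat_cont r J).pow m).mul (ch_cont _)))

lemma Ker.le_integral (hK : Ker d r J b κ) (m : ℕ) (x : Fin d → ℤ) :
    latIter J m x ≤ ∫ k, ‖hat r J k‖ ^ m ∂(mu d) := by
  calc latIter J m x ≤ ‖(latIter J m x : ℂ)‖ := by
        rw [Complex.norm_real]; exact le_abs_self _
    _ ≤ ∫ k, ‖hat r J k ^ m * ch k (-x)‖ ∂(mu d) := by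
        rw [hK.inversion]; exact MeasureTheory.norm_integral_le_integral_norm _
    _ = _ := by simp_rw [norm_mul, ch_norm, norm_pow, mul_one]

lemma Ker.l2 (hK : Ker d r J b κ) : ∫ k, ‖hat r J k‖ ^ 2 ∂(mu d) ≤ b / (r:ℝ) ^ d := by
  have h1 : ((∫ k, ‖hat r J k‖ ^ 2 ∂(mu d) : ℝ) : ℂ) = ((∑ z ∈ bx d r, J z * J z : ℝ) : ℂ) := by
    rw [← integral_complex_ofReal]
    have h2 : ∀ k, ((‖hat r J k‖ ^ 2 : ℝ) : ℂ) = ∑ z ∈ bx d r, (J z : ℂ) * (hat r J k ^ 1 * ch k (-z)) := by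
      intro k
      have : ((‖hat r J k‖ ^ 2 : ℝ) : ℂ) = hat r J k * (starRingEnd ℂ) (hat r J k) := by
        rw [Complex.mul_conj, Complex.normSq_eq_norm_sq]
      rw [this]
      conv_lhs => rw [show (starRingEnd ℂ) (hat r J k) = (starRingEnd ℂ) (∑ y ∈ bx d r, (J y : ℂ) * ch k y) from rfl]
      rw [map_sum, mul_sum]
      refine sum_congr rfl fun z _ => ?_
      rw [map_mul, ch_conj, Complex.conj_ofReal]; ring
    simp_rw [h2]
    rw [MeasureTheory.integral_finsetSum]
    · push_cast
      refine sum_congr rfl fun z _ => ?_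
      rw [MeasureTheory.integral_const_mul, ← hK.inversion, hK.latIter_one]
    · intro y _
      exact mu_int (continuous_const.mul (((hat_cont r J).pow 1).mul (ch_cont _)))
  have h3 : ∫ k, ‖hat r J k‖ ^ 2 ∂(mu d) = ∑ z ∈ bx d r, J z * J z := by exact_mod_cast h1
  rw [h3]
  calc _ ≤ ∑ z ∈ bx d r, J z * (b / (r:ℝ) ^ d) := 
        sum_le_sum fun z _ => mul_le_mul_of_nonneg_left (hK.bound z) (hK.nonneg z)
    _ = _ := by rw [← sum_mul, hK.sum_one, one_mul]

def ph (r : ℕ) (J : (Fin d → ℤ) → ℝ) (i : Fin d) : ℝ → ℝ := phi (bx d r) J (fun x => x i)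
def gh (r : ℕ) (J : (Fin d → ℤ) → ℝ) (i : Fin d) : ℝ → ℝ := gg (bx d r) J (fun x => x i)

lemma Ker.hat_le (hK : Ker d r J b κ) (k : Fin d → ℝ) (i : Fin d) :
    ‖hat r J k‖ ≤ 1 - ph r J i (k i) / 2 := by
  have h1 : hat r J k = ∑ y ∈ bx d r, (J y : ℂ) * ch k (Function.update y i (-y i)) := by
    unfold hat
    rw [← sum_flip i]
    refine sum_congr rfl fun y _ => ?_
    rw [hK.flip]
  have h2 : hat r J k = ∑ y ∈ bx d r, (J y : ℂ) * ((ch k y + ch k (Function.update y i (-y i))) / 2) := by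
    have : hat r J k = (hat r J k + hat r J k) / 2 := by ring
    rw [this]
    nth_rw 2 [h1]
    unfold hat
    rw [← sum_add_distrib, sum_div]
    refine sum_congr rfl fun y _ => by ring
  rw [h2]
  have h3 : ∀ y, ‖(ch k y + ch k (Function.update y i (-y i))) / 2‖ ≤ 1 - Real.sin (2 * Real.pi * y i * k i) ^ 2 / 2 := by
    intro y
    have e1 : ch k y = ee (k i) (y i) * ∏ j ∈ univ.erase i, ee (k j) (y j) := (mul_prod_erase _ _ (mem_univ i)).symm
    have e2 : ch k (Function.update y i (-y i)) = ee (k i) (-y i) * ∏ j ∈ univ.erase i, ee (k j) (y j) := by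
      unfold ch
      rw [← mul_prod_erase _ _ (mem_univ i)]
      congr 1
      · simp
      · refine prod_congr rfl fun j hj => ?_
        rw [Function.update_of_ne (ne_of_mem_erase hj)]
    rw [e1, e2, ← add_mul, ee_avg, norm_div, norm_mul, norm_prod]
    simp only [ee_norm, prod_const_one, mul_one, Complex.norm_real]
    rw [Real.norm_eq_abs, abs_mul]
    have e3 : |Real.cos (2 * Real.pi * y i * k i)| ≤ 1 - Real.sin (2 * Real.pi * y i * k i) ^ 2 / 2 := by
      have := Real.sin_sq_add_cos_sq (2 * Real.pi * y i * k i)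
      apply abs_le_of_sq_le_sq
      · nlinarith [sq_nonneg (Real.sin (2 * Real.pi * y i * k i) ^ 2)]
      · nlinarith [sq_nonneg (Real.cos (2 * Real.pi * y i * k i))]
    simp
    linarith
  calc _ ≤ ∑ y ∈ bx d r, J y * (1 - Real.sin (2 * Real.pi * y i * k i) ^ 2 / 2) := by
        refine (norm_sum_le _ _).trans (sum_le_sum fun y _ => ?_)
        rw [norm_mul, Complex.norm_real, Real.norm_eq_abs, abs_of_nonneg (hK.nonneg y)]
        exact mul_le_mul_of_nonneg_left (h3 y) (hK.nonneg y)
    _ = _ := by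
      unfold ph phi
      simp_rw [mul_sub, mul_one]
      rw [sum_sub_distrib, hK.sum_one, sum_div]
      congr 1
      refine sum_congr rfl fun y _ => by ring

lemma Ker.pointwise (hK : Ker d r J b κ) (hd : 0 < d) (m : ℕ) (hm : 2 ≤ m) (k : Fin d → ℝ) :
    ‖hat r J k‖ ^ m ≤ (15/16 : ℝ) ^ (m - 2) * ‖hat r J k‖ ^ 2 +
      ∏ i, (2 * gh r J i (k i) ^ 2 * Real.exp (-(1 / (2 * d) * m * ph r J i (k i)))) := by
  have hF : 0 ≤ ∏ i, (2 * gh r J i (k i) ^ 2 * Real.exp (-(1 / (2 * d) * m * ph r J i (k i)))) :=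
    prod_nonneg fun i _ => by positivity
  by_cases h : ∃ i, 1 / 8 < ph r J i (k i)
  · obtain ⟨i, hi⟩ := h
    have h1 := hK.hat_le k i
    have : ‖hat r J k‖ ^ m = ‖hat r J k‖ ^ (m - 2) * ‖hat r J k‖ ^ 2 := by
      rw [← pow_add]; congr 1; omega
    rw [this]
    have : ‖hat r J k‖ ^ (m - 2) ≤ (15/16 : ℝ) ^ (m - 2) := by
      gcongr; linarith
    nlinarith [mul_le_mul_of_nonneg_right this (sq_nonneg ‖hat r J k‖)]
  · push Not at h
    have hd' : (0:ℝ) < d := by exact_mod_cast hd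
    have h1 : ‖hat r J k‖ ≤ Real.exp (-(1 / (2 * d) * ∑ i, ph r J i (k i))) := by
      have : ∑ i : Fin d, ‖hat r J k‖ ≤ ∑ i, (1 - ph r J i (k i) / 2) := sum_le_sum fun i _ => hK.hat_le k i
      rw [sum_sub_distrib, ← sum_div] at this
      simp at this
      have h2 : ‖hat r J k‖ ≤ 1 - 1 / (2 * d) * ∑ i, ph r J i (k i) := by
        have : d * ‖hat r J k‖ ≤ d * (1 - 1 / (2 * d) * ∑ i, ph r J i (k i)) := by
          refine this.trans (le_of_eq ?_)
          field_simp
        exact le_of_mul_le_mul_left this hd'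
      refine h2.trans ?_
      have := Real.add_one_le_exp (-(1 / (2 * d) * ∑ i, ph r J i (k i)))
      linarith
    have h2 : ‖hat r J k‖ ^ m ≤ ∏ i, Real.exp (-(1 / (2 * d) * m * ph r J i (k i))) := by
      calc _ ≤ (Real.exp (-(1 / (2 * d) * ∑ i, ph r J i (k i)))) ^ m := by gcongr
        _ = _ := by
          rw [← Real.exp_nat_mul, ← Real.exp_sum]
          congr 1
          rw [sum_neg_distrib, ← mul_sum]; ring
    refine h2.trans ?_
    have h3 : ∏ i, Real.exp (-(1 / (2 * d) * m * ph r J i (k i))) ≤ 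
      ∏ i, (2 * gh r J i (k i) ^ 2 * Real.exp (-(1 / (2 * d) * m * ph r J i (k i)))) := by
      refine prod_le_prod (fun i _ => (Real.exp_pos _).le) fun i _ => ?_
      have : 1 ≤ 2 * gh r J i (k i) ^ 2 := by
        have e : gh r J i (k i) = 1 - 2 * ph r J i (k i) := gg_eq _ _ _ hK.sum_one _
        have := h i
        rw [e]; nlinarith
      exact le_mul_of_one_le_left (Real.exp_pos _).le this
    have : 0 ≤ (15/16 : ℝ) ^ (m - 2) * ‖hat r J k‖ ^ 2 := by positivity
    linarith

lemma Ker.marginal (hK : Ker d r J b κ) (i : Fin d) (y : ℤ) :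
    (∑ x ∈ bx d r, if x i = y then J x else 0) ≤ 3 ^ d * b / r := by
  have hr : (1:ℝ) ≤ r := by exact_mod_cast hK.hr
  have hb := hK.hb
  rw [← sum_filter]
  have h1 : ((bx d r).filter fun x => x i = y) ⊆ Fintype.piFinset (Function.update (fun _ => Icc (-(r:ℤ)) r) i {y}) := by
    intro x hx
    rw [mem_filter, bx, Fintype.mem_piFinset] at hx
    rw [Fintype.mem_piFinset]
    intro j
    by_cases hj : j = i
    · subst hj; simp [hx.2]
    · rw [Function.update_of_ne hj]; exact hx.1 j
  have h2 : (((bx d r).filter fun x => x i = y).card : ℝ) ≤ (3 * r) ^ (d - 1) := by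
    have := card_le_card h1
    rw [Fintype.card_piFinset] at this
    have e : ∏ j, (Function.update (fun _ : Fin d => Icc (-(r:ℤ)) r) i {y} j).card = (2 * r + 1) ^ (d - 1) := by
      rw [← mul_prod_erase _ _ (mem_univ i)]
      rw [Function.update_self, card_singleton, one_mul]
      rw [prod_congr rfl (g := fun _ => 2 * r + 1)]
      · simp [card_erase_of_mem]
      · intro j hj
        rw [Function.update_of_ne (ne_of_mem_erase hj), Int.card_Icc]; omega
    rw [e] at this
    calc _ ≤ (((2 * r + 1) ^ (d - 1) : ℕ) : ℝ) := by exact_mod_cast this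
      _ ≤ _ := by push_cast; gcongr; linarith
  have hd : 1 ≤ d := by have := i.2; omega
  calc _ ≤ ∑ x ∈ (bx d r).filter (fun x => x i = y), b / (r:ℝ)^d := sum_le_sum fun x _ => hK.bound x
    _ = (((bx d r).filter fun x => x i = y).card : ℝ) * (b / (r:ℝ)^d) := by rw [sum_const, nsmul_eq_mul]
    _ ≤ (3 * r) ^ (d - 1) * (b / (r:ℝ)^d) := by gcongr
    _ ≤ (3 ^ d * r ^ (d-1)) * (b / (r:ℝ)^d) := by
        rw [mul_pow]; gcongr
        · norm_num
        · omega
    _ = _ := by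
        obtain ⟨n, rfl⟩ : ∃ n, d = n + 1 := ⟨d - 1, by omega⟩
        simp only [Nat.add_sub_cancel]
        field_simp
        ring

lemma Ker.heat1 (hK : Ker d r J b κ) (hd : 0 < d) (m : ℕ) (hm : 2 ≤ m) (x : Fin d → ℤ) :
    latIter J m x ≤ (15/16 : ℝ) ^ (m - 2) * (b / (r:ℝ)^d) +
      (C1 (1 / (2 * d)) κ / √m * (3 ^ d * b / r)) ^ d := by
  have hd' : (0:ℝ) < d := by exact_mod_cast hd
  have c1 : Continuous fun k : Fin d → ℝ => (15/16 : ℝ) ^ (m - 2) * ‖hat r J k‖ ^ 2 :=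
    continuous_const.mul ((hat_cont r J).norm.pow 2)
  have c0 : ∀ i, Continuous fun t : ℝ => 2 * gh r J i t ^ 2 * Real.exp (-(1 / (2 * d) * m * ph r J i t)) := by
    intro i
    have h1 : Continuous (gh r J i) := gg_cont _ _ _
    have h2 : Continuous (ph r J i) := phi_cont _ _ _
    fun_prop
  have c2 : Continuous fun k : Fin d → ℝ => ∏ i, (2 * gh r J i (k i) ^ 2 * Real.exp (-(1 / (2 * d) * m * ph r J i (k i)))) :=
    continuous_finsetProd _ fun i _ => (c0 i).comp (continuous_apply i)
  calc _ ≤ ∫ k, ‖hat r J k‖ ^ m ∂(mu d) := hK.le_integral m x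
    _ ≤ ∫ k, ((15/16 : ℝ) ^ (m - 2) * ‖hat r J k‖ ^ 2 +
      ∏ i, (2 * gh r J i (k i) ^ 2 * Real.exp (-(1 / (2 * d) * m * ph r J i (k i))))) ∂(mu d) :=
      MeasureTheory.integral_mono (mu_int ((hat_cont r J).norm.pow m)) (mu_int (c1.add c2)) (hK.pointwise hd m hm)
    _ = (15/16 : ℝ) ^ (m - 2) * ∫ k, ‖hat r J k‖ ^ 2 ∂(mu d) + 
        ∏ i, ∫ t in (0:ℝ)..1, 2 * gh r J i t ^ 2 * Real.exp (-(1 / (2 * d) * m * ph r J i t)) := by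
      rw [MeasureTheory.integral_add (mu_int c1) (mu_int c2), MeasureTheory.integral_const_mul]
      congr 1
      unfold mu
      rw [MeasureTheory.integral_fintype_prod_eq_prod (fun i t => 2 * gh r J i t ^ 2 * Real.exp (-(1 / (2 * d) * m * ph r J i t)))]
      refine prod_congr rfl fun i _ => ?_
      rw [intervalIntegral.integral_of_le zero_le_one]
    _ ≤ (15/16 : ℝ) ^ (m - 2) * (b / (r:ℝ)^d) + ∏ i : Fin d, (C1 (1 / (2 * d)) κ / √m * (3 ^ d * b / r)) := by
      refine add_le_add (mul_le_mul_of_nonneg_left hK.l2 (by positivity)) (prod_le_prod (fun i _ => ?_) (fun i _ => ?_))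
      · apply intervalIntegral.integral_nonneg zero_le_one
        intro t _; positivity
      · apply oneD (bx d r) J (fun x => x i) hK.nonneg hK.sum_one r hK.hr _ κ hK.hκ (hK.var i) _ (hK.marginal i) _ (by positivity) m (by omega)
        intro x hx
        exact_mod_cast mem_bx.1 hx i
    _ = _ := by simp

end
end
end Blackbox

namespace Blackbox
section
open Finset

def EE {d : ℕ} (r : ℕ) (J : (Fin d → ℤ) → ℝ) : ℕ → ((Fin d → ℤ) → ℝ) → ℝ
  | 0, f => f 0
  | m + 1, f => ∑ z ∈ bx d r, J z * EE r J m (fun y => f (y + z))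

section
variable {d r : ℕ} {J : (Fin d → ℤ) → ℝ} {b κ : ℝ} 

lemma Ker.lat_eq (hK : Ker d r J b κ) (m : ℕ) (x : Fin d → ℤ) :
    latIter J m x = EE r J m (fun y => if y = x then 1 else 0) := by
  induction m generalizing x with
  | zero => simp only [latIter, EE, eq_comm]
  | succ m ih =>
    rw [hK.latIter_succ]
    simp only [EE]
    refine sum_congr rfl fun z _ => ?_
    rw [ih]
    simp only [eq_sub_iff_add_eq]

lemma Ker.ck (hK : Ker d r J b κ) (m n : ℕ) (x : Fin d → ℤ) :
    latIter J (m + n) x = EE r J m (fun y => latIter J n (x - y)) := by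
  induction m generalizing x with
  | zero => simp [EE]
  | succ m ih =>
    rw [show m + 1 + n = (m + n) + 1 by ring, hK.latIter_succ]
    simp only [EE]
    refine sum_congr rfl fun z _ => ?_
    rw [ih]
    congr 2; ext y; congr 1; abel

lemma Ker.EE_mono (hK : Ker d r J b κ) (m : ℕ) {f g : (Fin d → ℤ) → ℝ} (h : ∀ y, f y ≤ g y) :
    EE r J m f ≤ EE r J m g := by
  induction m generalizing f g with
  | zero => exact h 0
  | succ m ih =>
    simp only [EE]
    exact sum_le_sum fun z _ => mul_le_mul_of_nonneg_left (ih fun y => h _) (hK.nonneg z)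

lemma EE_add (m : ℕ) (f g : (Fin d → ℤ) → ℝ) :
    EE r J m (fun y => f y + g y) = EE r J m f + EE r J m g := by
  induction m generalizing f g with
  | zero => rfl
  | succ m ih =>
    simp only [EE]
    rw [← sum_add_distrib]
    refine sum_congr rfl fun z _ => ?_
    rw [ih (fun y => f (y + z)) (fun y => g (y+z)), mul_add]

lemma EE_mul (m : ℕ) (c : ℝ) (f : (Fin d → ℤ) → ℝ) :
    EE r J m (fun y => c * f y) = c * EE r J m f := by
  induction m generalizing f with
  | zero => rfl
  | succ m ih =>
    simp only [EE]
    rw [mul_sum]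
    refine sum_congr rfl fun z _ => ?_
    rw [ih (fun y => f (y + z))]; ring

lemma EE_sum {ι : Type*} (S : Finset ι) (m : ℕ) (f : ι → (Fin d → ℤ) → ℝ) :
    EE r J m (fun y => ∑ z ∈ S, f z y) = ∑ z ∈ S, EE r J m (f z) := by
  induction m generalizing f with
  | zero => rfl
  | succ m ih =>
    simp only [EE]
    rw [sum_comm]
    refine sum_congr rfl fun z _ => ?_
    rw [ih (fun w y => f w (y + z)), mul_sum]

lemma EE_comm (m n : ℕ) (F : (Fin d → ℤ) → (Fin d → ℤ) → ℝ) :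
    EE r J m (fun y => EE r J n (fun z => F y z)) = EE r J n (fun z => EE r J m (fun y => F y z)) := by
  induction m generalizing F with
  | zero => rfl
  | succ m ih =>
    simp only [EE]
    rw [EE_sum]
    refine sum_congr rfl fun w _ => ?_
    rw [EE_mul, ih (fun y z => F (y + w) z)]

lemma Ker.mgf (hK : Ker d r J b κ) (i : Fin d) (l : ℝ) :
    ∑ z ∈ bx d r, J z * Real.exp (l * z i) ≤ Real.exp (l ^ 2 * r ^ 2 / 2) := by
  have h1 : ∑ z ∈ bx d r, J z * Real.exp (l * z i) = ∑ z ∈ bx d r, J z * Real.exp (-(l * z i)) := by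
    rw [← sum_flip i]
    refine sum_congr rfl fun z _ => ?_
    rw [hK.flip]; simp
  have h2 : ∑ z ∈ bx d r, J z * Real.exp (l * z i) = ∑ z ∈ bx d r, J z * Real.cosh (l * z i) := by
    have : ∑ z ∈ bx d r, J z * Real.cosh (l * z i) =
      (∑ z ∈ bx d r, J z * Real.exp (l * z i) + ∑ z ∈ bx d r, J z * Real.exp (-(l * z i))) / 2 := by
      rw [← sum_add_distrib, sum_div]
      refine sum_congr rfl fun z _ => ?_
      rw [Real.cosh_eq]; ring
    rw [this, ← h1]; ring
  rw [h2]
  calc _ ≤ ∑ z ∈ bx d r, J z * Real.exp (l ^ 2 * r ^ 2 / 2) := by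
        refine sum_le_sum fun z hz => mul_le_mul_of_nonneg_left ?_ (hK.nonneg z)
        refine (Real.cosh_le_exp_half_sq _).trans (Real.exp_le_exp.2 ?_)
        have : |(z i : ℝ)| ≤ r := by exact_mod_cast mem_bx.1 hz i
        have : (z i : ℝ) ^ 2 ≤ r ^ 2 := by
          rw [← sq_abs]; gcongr
        rw [mul_pow]; gcongr
    _ = _ := by rw [← sum_mul, hK.sum_one, one_mul]

lemma Ker.EE_exp (hK : Ker d r J b κ) (i : Fin d) (l : ℝ) (m : ℕ) :
    EE r J m (fun y => Real.exp (l * y i)) ≤ Real.exp (l ^ 2 * r ^ 2 * m / 2) := by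
  induction m with
  | zero => simp [EE]
  | succ m ih =>
    simp only [EE]
    have h1 : ∀ z : Fin d → ℤ, EE r J m (fun y => Real.exp (l * (y + z) i)) =
        Real.exp (l * z i) * EE r J m (fun y => Real.exp (l * y i)) := by
      intro z
      rw [← EE_mul]
      congr 1; ext y
      rw [← Real.exp_add]; congr 1; simp; ring
    simp_rw [h1, ← mul_assoc]
    rw [← sum_mul]
    calc _ ≤ Real.exp (l ^ 2 * r ^ 2 / 2) * Real.exp (l ^ 2 * r ^ 2 * m / 2) := by
          apply mul_le_mul (hK.mgf i l) ih _ (Real.exp_pos _).le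
          have := hK.EE_mono m (f := fun y => 0 * (0:ℝ)) (g := fun y => Real.exp (l * y i)) (fun y => by simpa using (Real.exp_pos _).le)
          rw [EE_mul m 0 (fun _ => 0)] at this
          simpa using this
      _ = _ := by rw [← Real.exp_add]; congr 1; push_cast; ring

lemma Ker.half (hK : Ker d r J b κ) (i : Fin d) (l : ℝ) (m n : ℕ) (x : Fin d → ℤ) (B : ℝ)
    (hB : ∀ y, latIter J n y ≤ B) :
    EE r J m (fun y => Real.exp (l * y i) * latIter J n (x - y)) ≤ B * Real.exp (l ^ 2 * r ^ 2 * m / 2) := by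
  have hB0 : 0 ≤ B := (hK.latIter_nonneg n 0).trans (hB 0)
  calc _ ≤ EE r J m (fun y => B * Real.exp (l * y i)) := by
        apply hK.EE_mono
        intro y
        rw [mul_comm]; gcongr; exact hB _
    _ = B * EE r J m (fun y => Real.exp (l * y i)) := EE_mul _ _ _
    _ ≤ _ := by gcongr; exact hK.EE_exp i l m

lemma Ker.split (hK : Ker d r J b κ) (i : Fin d) (l : ℝ) (m n : ℕ) (x : Fin d → ℤ) (Bm Bn : ℝ)
    (hm : ∀ y, latIter J m y ≤ Bm) (hn : ∀ y, latIter J n y ≤ Bn) :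
    latIter J (m + n) x ≤ Real.exp (-(l * x i / 2)) *
      (Bn * Real.exp (l ^ 2 * r ^ 2 * m / 2) + Bm * Real.exp (l ^ 2 * r ^ 2 * n / 2)) := by
  have h1 := hK.half i l m n x Bn hn
  have h2 := hK.half i l n m x Bm hm
  calc latIter J (m + n) x = EE r J m (fun y => EE r J n (fun z => if z = x - y then 1 else 0)) := by
        rw [hK.ck]; congr 1; ext y; rw [hK.lat_eq]
    _ ≤ EE r J m (fun y => EE r J n (fun z => Real.exp (-(l * x i / 2)) * 
          (Real.exp (l * y i) * (if z = x - y then 1 else 0) + Real.exp (l * z i) * (if y = x - z then 1 else 0)))) := by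
        refine hK.EE_mono _ fun y => hK.EE_mono _ fun z => ?_
        have e : (y = x - z) ↔ (z = x - y) := by
          constructor <;> (intro h; rw [h]; abel)
        simp only [e]
        split_ifs with h
        · have hx : (x i : ℝ) = y i + z i := by rw [h]; simp
          rw [mul_one, mul_one, mul_add, ← Real.exp_add, ← Real.exp_add, hx]
          rcases le_total 0 (l * y i - l * z i) with h' | h'
          · have : 1 ≤ Real.exp (-(l * (y i + z i) / 2) + l * y i) := Real.one_le_exp (by linarith)
            linarith [Real.exp_pos (-(l * (y i + z i) / 2) + l * z i)]
          · have : 1 ≤ Real.exp (-(l * (y i + z i) / 2) + l * z i) := Real.one_le_exp (by linarith)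
            linarith [Real.exp_pos (-(l * (y i + z i) / 2) + l * y i)]
        · simp
    _ = Real.exp (-(l * x i / 2)) * (EE r J m (fun y => Real.exp (l * y i) * latIter J n (x - y)) + 
          EE r J n (fun y => Real.exp (l * y i) * latIter J m (x - y))) := by
        simp_rw [EE_mul, EE_add]
        congr 2
        · congr 1; ext y; rw [EE_mul, hK.lat_eq n]
        · rw [EE_comm]
          congr 1; ext y; rw [EE_mul, hK.lat_eq m]
    _ ≤ _ := by gcongr

lemma exists_D (d : ℕ) : ∃ D : ℝ, 0 < D ∧ ∀ m : ℕ, 2 ≤ m → (15/16 : ℝ) ^ (m - 2) ≤ D / √m ^ d := by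
  have h := tendsto_pow_const_mul_const_pow_of_abs_lt_one d (r := (15/16:ℝ)) (by rw [abs_of_pos] <;> norm_num)
  obtain ⟨D, hD⟩ := h.bddAbove_range
  refine ⟨2 * (|D| + 1), by positivity, fun m hm => ?_⟩
  have h1 : (m:ℝ)^d * (15/16)^m ≤ D := hD ⟨m, rfl⟩
  have hm' : (1:ℝ) ≤ m := by exact_mod_cast (by omega : 1 ≤ m)
  have hs : 0 < √(m:ℝ) := Real.sqrt_pos.2 (by linarith)
  rw [le_div_iff₀ (by positivity)]
  have h2 : √(m:ℝ) ^ d ≤ (m:ℝ) ^ d := by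
    gcongr
    rw [Real.sqrt_le_left (by positivity)]; nlinarith
  have h3 : (15/16:ℝ)^m = (15/16)^(m-2) * (15/16)^2 := by rw [← pow_add]; congr 1; omega
  have h4 : (15/16:ℝ)^(m-2) * √(m:ℝ) ^ d ≤ (15/16:ℝ)^(m-2) * (m:ℝ) ^ d := by gcongr
  rw [h3] at h1
  have : 0 ≤ (15/16:ℝ)^(m-2) * (m:ℝ) ^ d := by positivity
  have h5 := le_abs_self D
  nlinarith

lemma heat_unif (d : ℕ) (hd : 0 < d) (b κ : ℝ) (hb : 0 < b) : ∃ A : ℝ, 0 < A ∧ b ≤ A ∧ 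
    ∀ (r : ℕ) (J : (Fin d → ℤ) → ℝ), Ker d r J b κ → ∀ m : ℕ, 1 ≤ m → ∀ x, latIter J m x ≤ A / (r * √m) ^ d := by
  obtain ⟨D, hD0, hD⟩ := exists_D d
  have hc : 0 ≤ (C1 (1 / (2 * d)) κ * (3 ^ d * b)) ^ d := by unfold C1; positivity
  refine ⟨b + b * D + (C1 (1 / (2 * d)) κ * (3 ^ d * b)) ^ d, by positivity, by nlinarith [mul_pos hb hD0], ?_⟩
  intro r J hK m hm x
  have hr : (1:ℝ) ≤ r := by exact_mod_cast hK.hr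
  have hm' : (1:ℝ) ≤ m := by exact_mod_cast hm
  have hs : 0 < √(m:ℝ) := Real.sqrt_pos.2 (by linarith)
  rcases Nat.lt_or_ge m 2 with h | h
  · obtain rfl : m = 1 := by omega
    rw [hK.latIter_one]
    refine (hK.bound x).trans ?_
    simp only [Nat.cast_one, Real.sqrt_one, mul_one]
    gcongr
    nlinarith [mul_pos hb hD0]
  · refine (hK.heat1 hd m h x).trans ?_
    calc _ ≤ D / √m ^ d * (b / (r:ℝ)^d) + (C1 (1 / (2 * d)) κ / √m * (3 ^ d * b / r)) ^ d := by
          gcongr; exact hD m h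
      _ = (b * D + (C1 (1 / (2 * d)) κ * (3 ^ d * b)) ^ d) / (r * √m) ^ d := by
          rw [show C1 (1 / (2 * d)) κ / √m * (3 ^ d * b / r) = (C1 (1 / (2 * d)) κ * (3 ^ d * b)) / (r * √m) by field_simp]
          rw [div_pow _ (r * √m : ℝ), add_div, mul_pow (r:ℝ)]
          congr 1
          field_simp
      _ ≤ _ := by gcongr; linarith

lemma gauss_unif (d : ℕ) (hd : 0 < d) (b κ : ℝ) (hb : 0 < b) : ∃ A : ℝ, 0 < A ∧ 
    ∀ (r : ℕ) (J : (Fin d → ℤ) → ℝ), Ker d r J b κ → ∀ m : ℕ, 1 ≤ m → ∀ x i, 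
      latIter J m x ≤ A / (r * √m) ^ d * Real.exp (-((x i : ℝ) ^ 2 / (8 * r ^ 2 * m))) := by
  obtain ⟨A, hA, hbA, h⟩ := heat_unif d hd b κ hb
  refine ⟨2 * (2 ^ d * A), by positivity, ?_⟩
  intro r J hK m hm x i
  have hr : (1:ℝ) ≤ r := by exact_mod_cast hK.hr
  have hm' : (1:ℝ) ≤ m := by exact_mod_cast hm
  have hs : 0 < √(m:ℝ) := Real.sqrt_pos.2 (by linarith)
  rcases Nat.lt_or_ge m 2 with hm2 | hm2
  · obtain rfl : m = 1 := by omega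
    rw [hK.latIter_one]
    by_cases hx : x ∈ bx d r
    · have h1 : |(x i : ℝ)| ≤ r := by exact_mod_cast mem_bx.1 hx i
      have h2 : (x i : ℝ) ^ 2 / (8 * r ^ 2 * (1:ℕ)) ≤ 1 / 8 := by
        rw [div_le_div_iff₀ (by positivity) (by positivity)]
        have : (x i : ℝ) ^ 2 ≤ r ^ 2 := by
          rw [← sq_abs]; gcongr
        push_cast; linarith
      have h3 : 1 / 2 ≤ Real.exp (-((x i : ℝ) ^ 2 / (8 * r ^ 2 * (1:ℕ)))) := by
        have := Real.add_one_le_exp (-((x i : ℝ) ^ 2 / (8 * r ^ 2 * (1:ℕ))))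
        linarith
      calc _ ≤ b / (r:ℝ)^d := hK.bound x
        _ ≤ (2 * (1 * A) / (r * √(1:ℕ)) ^ d) * (1 / 2) := by
            simp only [Nat.cast_one, Real.sqrt_one, mul_one, one_mul]
            rw [div_mul_eq_mul_div]; gcongr; linarith
        _ ≤ _ := by
          gcongr
          exact one_le_pow₀ (by norm_num)
    · rw [hK.supp x hx]; positivity
  · have key : ∀ n : ℕ, m ≤ 4 * n → 1 ≤ n → ∀ y, latIter J n y ≤ 2 ^ d * A / (r * √m) ^ d := by
      intro n hn hn1 y
      refine (h r J hK n hn1 y).trans ?_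
      have hn' : (m:ℝ) ≤ 2 ^ 2 * n := by exact_mod_cast (by omega : m ≤ 2^2 * n)
      have e : √(m:ℝ) ≤ 2 * √n := by
        calc _ ≤ √(2 ^ 2 * n : ℝ) := Real.sqrt_le_sqrt hn'
          _ = _ := by rw [Real.sqrt_mul (by positivity), Real.sqrt_sq (by positivity)]
      have hn1' : (1:ℝ) ≤ n := by exact_mod_cast hn1
      have hsn : 0 < √(n:ℝ) := Real.sqrt_pos.2 (by linarith)
      calc A / (r * √n) ^ d = 2 ^ d * A / (r * (2 * √n)) ^ d := by
            rw [mul_pow, mul_pow, mul_pow]; field_simp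
        _ ≤ _ := by gcongr
    have hmn : m / 2 + (m - m / 2) = m := by omega
    set l : ℝ := x i / (2 * r ^ 2 * m) with hl
    have h1 := hK.split i l (m / 2) (m - m / 2) x _ _ (key (m / 2) (by omega) (by omega)) (key (m - m / 2) (by omega) (by omega))
    rw [hmn] at h1
    refine h1.trans ?_
    have c1 : ((m / 2 : ℕ) : ℝ) ≤ m := by exact_mod_cast Nat.div_le_self m 2
    have c2 : ((m - m / 2 : ℕ) : ℝ) ≤ m := by exact_mod_cast Nat.sub_le m _
    calc _ ≤ Real.exp (-(l * x i / 2)) * (2 ^ d * A / (r * √m) ^ d * Real.exp (l ^ 2 * r ^ 2 * m / 2) +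
              2 ^ d * A / (r * √m) ^ d * Real.exp (l ^ 2 * r ^ 2 * m / 2)) := by gcongr
      _ = 2 * (2 ^ d * A) / (r * √m) ^ d * (Real.exp (-(l * x i / 2)) * Real.exp (l ^ 2 * r ^ 2 * m / 2)) := by ring
      _ = _ := by
        rw [← Real.exp_add]
        congr 2
        rw [hl]; field_simp; ring
end
end
end Blackbox

namespace Blackbox
section
open Finset

lemma supNorm_attained {d : ℕ} (hd : 0 < d) (x : Fin d → ℤ) : ∃ i, supNorm x = |(x i : ℝ)| := by
  obtain ⟨i, _, hi⟩ := Finset.exists_mem_eq_sup (univ : Finset (Fin d)) ⟨⟨0, hd⟩, mem_univ _⟩ (fun i => (x i).natAbs)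
  refine ⟨i, ?_⟩
  unfold supNorm
  rw [hi, Nat.cast_natAbs, Int.cast_abs]

lemma abs_le_supNorm {d : ℕ} (x : Fin d → ℤ) (i : Fin d) : |(x i : ℝ)| ≤ supNorm x := by
  have : (x i).natAbs ≤ univ.sup fun i => (x i).natAbs := Finset.le_sup (f := fun i => (x i).natAbs) (mem_univ i)
  unfold supNorm
  rw [← Int.cast_abs, ← Nat.cast_natAbs]
  exact_mod_cast this

lemma sum_swap {d r : ℕ} (i j : Fin d) (f : (Fin d → ℤ) → ℝ) :
    ∑ x ∈ bx d r, f (fun k => x (Equiv.swap i j k)) = ∑ x ∈ bx d r, f x := by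
  refine Finset.sum_nbij' (fun x k => x (Equiv.swap i j k)) (fun x k => x (Equiv.swap i j k)) ?_ ?_ ?_ ?_ ?_
  · intro x hx; rw [mem_bx] at *; intro k; exact hx _
  · intro x hx; rw [mem_bx] at *; intro k; exact hx _
  · intro x _; ext k; simp
  · intro x _; ext k; simp
  · intro x _; rfl

lemma AdmissibleKernel.toKer {d : ℕ} (hd : 0 < d) {c₀ : ℝ} (hc : 0 < c₀) (K : AdmissibleKernel d c₀) :
    ∃ r : ℕ, Ker d r K.J c₀⁻¹ (c₀ ^ 2 / d) ∧ c₀ * r ≤ K.sigma ∧ K.sigma ≤ d * r := by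
  obtain ⟨x0, _, hx0⟩ := K.range_attained
  set r : ℕ := univ.sup fun i => (x0 i).natAbs with hr
  have hR : K.R = r := hx0.symm
  have hd' : (0:ℝ) < d := by exact_mod_cast hd
  have hd1 : (1:ℝ) ≤ d := by exact_mod_cast hd
  have hsupp : ∀ x, x ∉ bx d r → K.J x = 0 := by
    intro x hx
    by_contra h
    have hpos : 0 < K.J x := lt_of_le_of_ne (K.nonneg x) (Ne.symm h)
    apply hx
    rw [mem_bx]
    intro i
    have := (abs_le_supNorm x i).trans ((K.range_le x hpos).trans hR.le)
    exact_mod_cast this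
  have hsum : ∑ x ∈ bx d r, K.J x = 1 := by
    rw [← K.norm_one]; symm; exact tsum_eq_sum fun x hx => hsupp x hx
  have hsq : ∑' x, sqNorm x * K.J x = ∑ x ∈ bx d r, sqNorm x * K.J x :=
    tsum_eq_sum fun x hx => by rw [hsupp x hx, mul_zero]
  have hv : ∀ i, ∑ x ∈ bx d r, sqNorm x * K.J x = d * ∑ x ∈ bx d r, K.J x * (x i : ℝ) ^ 2 := by
    intro i
    have h1 : ∀ j, ∑ x ∈ bx d r, K.J x * (x j : ℝ) ^ 2 = ∑ x ∈ bx d r, K.J x * (x i : ℝ) ^ 2 := by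
      intro j
      rw [← sum_swap i j (fun x => K.J x * (x j : ℝ) ^ 2)]
      refine sum_congr rfl fun x _ => ?_
      have := K.symm (Equiv.swap i j) (fun _ => false) x
      simp at this
      rw [this]; simp
    simp_rw [sqNorm, sum_mul]
    rw [sum_comm]
    calc _ = ∑ j : Fin d, ∑ x ∈ bx d r, K.J x * (x i : ℝ) ^ 2 := by
          refine sum_congr rfl fun j _ => ?_
          rw [← h1 j]
          refine sum_congr rfl fun x _ => by ring
      _ = _ := by simp
  have hsig : K.sigma = √(∑ x ∈ bx d r, sqNorm x * K.J x) := by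
    unfold AdmissibleKernel.sigma; rw [hsq]
  have hlow : c₀ * r ≤ K.sigma := by rw [← hR]; exact K.sigma_lower
  have hsn : 0 ≤ ∑ x ∈ bx d r, sqNorm x * K.J x :=
    sum_nonneg fun x _ => mul_nonneg (sum_nonneg fun i _ => sq_nonneg _) (K.nonneg x)
  refine ⟨r, ⟨?_, inv_pos.2 hc, by positivity, K.nonneg, hsupp, hsum, ?_, ?_, ?_⟩, hlow, ?_⟩
  · have := K.R_ge_one; rw [hR] at this; exact_mod_cast this
  · intro i x
    have := K.symm 1 (fun j => decide (j = i)) x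
    rw [← this]
    congr 1; ext j
    by_cases hj : j = i
    · subst hj; simp
    · simp [hj]
  · intro x; rw [← hR]; exact K.J_upper x
  · intro i
    have h2 : (c₀ * r) ^ 2 ≤ ∑ x ∈ bx d r, sqNorm x * K.J x := by
      calc _ ≤ K.sigma ^ 2 := by gcongr
        _ = _ := by rw [hsig, Real.sq_sqrt hsn]
    rw [hv i] at h2
    rw [div_mul_eq_mul_div, div_le_iff₀ hd']
    linarith
  · rw [hsig, Real.sqrt_le_left (by positivity)]
    calc _ ≤ ∑ x ∈ bx d r, (d * r ^ 2) * K.J x := by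
          refine sum_le_sum fun x hx => mul_le_mul_of_nonneg_right ?_ (K.nonneg x)
          unfold sqNorm
          calc _ ≤ ∑ i : Fin d, (r:ℝ) ^ 2 := by
                refine sum_le_sum fun i _ => ?_
                have : |(x i : ℝ)| ≤ r := by exact_mod_cast mem_bx.1 hx i
                rw [← sq_abs]; gcongr
            _ = _ := by simp
      _ = d * r ^ 2 := by rw [← mul_sum, hsum, mul_one]
      _ ≤ _ := by rw [mul_pow]; gcongr; nlinarith

lemma tele (v : ℝ) (hv : 1 ≤ v) : 1 / √v ^ 3 ≤ 4 * (1 / √v - 1 / √(v + 1)) := by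
  set a := √v with ha
  set c := √(v + 1) with hc
  have ha1 : 1 ≤ a := by rw [ha, Real.one_le_sqrt]; exact hv
  have hca : a ≤ c := Real.sqrt_le_sqrt (by linarith)
  have ha2 : a ^ 2 = v := Real.sq_sqrt (by linarith)
  have hc2 : c ^ 2 = a ^ 2 + 1 := by rw [ha2]; exact Real.sq_sqrt (by linarith)
  have hc3 : c ≤ 3 / 2 * a := by
    apply le_of_sq_le_sq _ (by positivity)
    nlinarith
  have e : 1 / a - 1 / c = 1 / (a * c * (a + c)) := by
    have h1 : a ≠ 0 := by positivity
    have h2 : c ≠ 0 := by positivity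
    have h3 : a + c ≠ 0 := by positivity
    field_simp
    nlinarith
  rw [e, mul_one_div, div_le_div_iff₀ (by positivity) (by positivity)]
  have h4 : a * c * (a + c) ≤ a * (3 / 2 * a) * (a + 3 / 2 * a) := by gcongr
  have : 0 < a ^ 3 := by positivity
  nlinarith

lemma exp_poly (d : ℕ) (hd : 0 < d) (n t : ℝ) (hn : 1 ≤ n) :
    1 / √n ^ d * Real.exp (-(t ^ 2 / (16 * n))) ≤ (16 * d) ^ d / √(n + t ^ 2) ^ d := by
  have hd' : (1:ℝ) ≤ d := by exact_mod_cast hd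
  set u := t ^ 2 / n with hu
  have hu0 : 0 ≤ u := by positivity
  have e1 : √(n + t ^ 2) = √n * √(1 + u) := by
    rw [← Real.sqrt_mul (by positivity)]; congr 1; rw [hu]; field_simp
  have hsn : 0 < √n := Real.sqrt_pos.2 (by linarith)
  have hsu : 0 < √(1 + u) := Real.sqrt_pos.2 (by linarith)
  have h1 : √(1 + u) ^ d ≤ (16 * d) ^ d * Real.exp (u / 16) := by
    calc _ ≤ (1 + u) ^ d := by
          gcongr
          rw [Real.sqrt_le_left (by positivity)]; nlinarith
      _ ≤ (16 * d * Real.exp (u / (16 * d))) ^ d := by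
          gcongr
          have := Real.add_one_le_exp (u / (16 * d))
          calc 1 + u ≤ 16 * d * (u / (16 * d) + 1) := by
                have : 16 * d * (u / (16 * d) + 1) = u + 16 * d := by field_simp
                rw [this]; linarith
            _ ≤ _ := by gcongr
      _ = _ := by
          rw [mul_pow, ← Real.exp_nat_mul]; congr 2; field_simp
  have e2 : t ^ 2 / (16 * n) = u / 16 := by rw [hu]; field_simp
  rw [e1, e2, Real.exp_neg, mul_pow (√n), one_div, ← mul_inv, ← one_div, div_le_div_iff₀ (by positivity) (by positivity)]
  have : 0 < √n ^ d := by positivity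
  nlinarith [mul_le_mul_of_nonneg_left h1 this.le]

lemma term_bd (d : ℕ) (hd : 2 < d) (n t : ℝ) (hn : 1 ≤ n) (ht : 0 ≤ t) :
    1 / √n ^ d * Real.exp (-(t ^ 2 / (16 * n))) ≤
      4 * (16 * d) ^ d / max 1 t ^ (d - 3) * (1 / √(n + t ^ 2) - 1 / √(n + 1 + t ^ 2)) := by
  refine (exp_poly d (by omega) n t hn).trans ?_
  set v := n + t ^ 2 with hv
  have hv1 : 1 ≤ v := by nlinarith [sq_nonneg t]
  have h1 := tele v hv1
  have hT : max 1 t ≤ √v := by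
    apply max_le
    · rw [Real.one_le_sqrt]; exact hv1
    · apply Real.le_sqrt_of_sq_le; linarith
  have hT0 : 0 < max 1 t := lt_of_lt_of_le one_pos (le_max_left _ _)
  have hsv : 0 < √v := lt_of_lt_of_le hT0 hT
  rw [show n + 1 + t ^ 2 = v + 1 by rw [hv]; ring]
  have e : √v ^ d = √v ^ (d - 3) * √v ^ 3 := by rw [← pow_add]; congr 1; omega
  calc (16 * d : ℝ) ^ d / √v ^ d = (16 * d) ^ d / √v ^ (d - 3) * (1 / √v ^ 3) := by
        rw [e]; field_simp
    _ ≤ (16 * d) ^ d / max 1 t ^ (d - 3) * (4 * (1 / √v - 1 / √(v + 1))) := by gcongr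
    _ = _ := by ring

lemma exp_beta (β : ℝ) (hβ : β ∈ Set.Icc (0:ℝ) 1) (n : ℕ) (hn : 1 ≤ n) (t : ℝ) :
    β ^ n * Real.exp (-(t ^ 2 / (8 * n))) ≤ Real.exp (-(√(1 - β) * t / 2)) * Real.exp (-(t ^ 2 / (16 * n))) := by
  have hn' : (1:ℝ) ≤ n := by exact_mod_cast hn
  have h1 : β ^ n ≤ Real.exp (-((1 - β) * n)) := by
    calc β ^ n ≤ (Real.exp (β - 1)) ^ n := by
          gcongr
          · exact hβ.1
          · have := Real.add_one_le_exp (β - 1); linarith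
      _ = _ := by rw [← Real.exp_nat_mul]; congr 1; ring
  calc _ ≤ Real.exp (-((1 - β) * n)) * Real.exp (-(t ^ 2 / (8 * n))) := by gcongr
    _ ≤ _ := by
      rw [← Real.exp_add, ← Real.exp_add]
      apply Real.exp_le_exp.2
      set s := √(1 - β) with hs
      have hs2 : 1 - β = s ^ 2 := (Real.sq_sqrt (by linarith [hβ.2])).symm
      rw [hs2]
      have e : s ^ 2 * n + t ^ 2 / (8 * n) - s * t / 2 - t ^ 2 / (16 * n) = (s * n - t / 4) ^ 2 / n := by
        field_simp; ring
      have : 0 ≤ (s * n - t / 4) ^ 2 / n := by positivity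
      linarith

lemma green_sum (d : ℕ) (hd : 2 < d) (P : ℕ → ℝ) (A r t β : ℝ) (hA : 0 < A) (hr : 1 ≤ r)
    (ht : 0 ≤ t) (hβ : β ∈ Set.Icc (0:ℝ) 1)
    (hb : ∀ m : ℕ, 1 ≤ m → P m ≤ A / (r * √m) ^ d * Real.exp (-(t ^ 2 / (8 * m)))) (N : ℕ) :
    ∑ m ∈ range (N + 1), β ^ m * P m ≤ P 0 + 
      A / r ^ d * Real.exp (-(√(1 - β) * t / 2)) * (4 * (16 * d) ^ d / max 1 t ^ (d - 3)) *
        (1 / √(1 + t ^ 2) - 1 / √((N:ℝ) + 1 + t ^ 2)) := by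
  induction N with
  | zero => simp
  | succ N ih =>
    rw [sum_range_succ]
    have h1 := hb (N + 1) (by omega)
    have hN : (1:ℝ) ≤ ((N + 1 : ℕ) : ℝ) := by exact_mod_cast (by omega : 1 ≤ N + 1)
    have h2 := term_bd d hd ((N + 1 : ℕ) : ℝ) t hN ht
    have h3 := exp_beta β hβ (N + 1) (by omega) t
    set M : ℝ := ((N + 1 : ℕ) : ℝ) with hM
    have hs : 0 < √M := Real.sqrt_pos.2 (by linarith)
    have hβn : 0 ≤ β ^ (N + 1) := pow_nonneg hβ.1 _
    have h4 : β ^ (N + 1) * P (N + 1) ≤ A / r ^ d * Real.exp (-(√(1 - β) * t / 2)) * (4 * (16 * d) ^ d / max 1 t ^ (d - 3)) *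
        (1 / √(M + t ^ 2) - 1 / √(M + 1 + t ^ 2)) := by
      calc _ ≤ β ^ (N + 1) * (A / (r * √M) ^ d * Real.exp (-(t ^ 2 / (8 * M)))) := by gcongr
        _ = A / r ^ d * (1 / √M ^ d) * (β ^ (N + 1) * Real.exp (-(t ^ 2 / (8 * M)))) := by
            rw [mul_pow]; field_simp
        _ ≤ A / r ^ d * (1 / √M ^ d) * (Real.exp (-(√(1 - β) * t / 2)) * Real.exp (-(t ^ 2 / (16 * M)))) := by gcongr
        _ = A / r ^ d * Real.exp (-(√(1 - β) * t / 2)) * ((1 / √M ^ d) * Real.exp (-(t ^ 2 / (16 * M)))) := by ring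
        _ ≤ A / r ^ d * Real.exp (-(√(1 - β) * t / 2)) * (4 * (16 * d) ^ d / max 1 t ^ (d - 3) *
              (1 / √(M + t ^ 2) - 1 / √(M + 1 + t ^ 2))) := by gcongr
        _ = _ := by ring
    have e : (N:ℝ) + 1 = M := by rw [hM]; push_cast; ring
    rw [e] at ih
    linarith

end
end Blackbox

/-- anti-concentration and Green function estimates for the `J`-random walk
(`Prop:Green`). -/
theorem statement7 (d : ℕ) (hd : 2 < d) (c₀ : ℝ) (hc₀ : c₀ ∈ Set.Ioc (0:ℝ) 1) :
    ∃ c > (0:ℝ), ∃ C > (0:ℝ), ∀ K : AdmissibleKernel d c₀, ∀ β : ℝ,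
      β ∈ Set.Icc (0:ℝ) 1 → ∀ m : ℕ, 1 ≤ m → ∀ x : Fin d → ℤ,
        latIter K.J m x ≤ C / K.sigma ^ d * (1 / (m:ℝ) ^ ((d:ℝ)/2)) *
          Real.exp (-c * supNorm x / (K.sigma * Real.sqrt m)) ∧
        latGreen K.J β x ≤ ENNReal.ofReal ((if x = 0 then 1 else 0) +
          C / K.sigma ^ d * (K.sigma / max K.sigma (supNorm x)) ^ ((d:ℝ) - 2) *
            Real.exp (-c * Real.sqrt (1 - β) * supNorm x / K.sigma)) := by
  obtain ⟨hc, hc1⟩ := hc₀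
  have hd0 : 0 < d := by omega
  have hd1 : (1:ℝ) ≤ d := by exact_mod_cast hd0
  obtain ⟨A, hA, hG⟩ := gauss_unif d hd0 c₀⁻¹ (c₀ ^ 2 / d) (inv_pos.2 hc)
  refine ⟨c₀ / 2, by positivity, 4 * (16 * d) ^ d * A * d ^ d / c₀ ^ (d - 2), by positivity, ?_⟩
  intro K β hβ m hm x
  obtain ⟨r, hK, hs1, hs2⟩ := K.toKer hd0 hc
  set σ := K.sigma with hσ
  have hr : (1:ℝ) ≤ r := by exact_mod_cast hK.hr
  have hσ0 : 0 < σ := lt_of_lt_of_le (by positivity) hs1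
  obtain ⟨i, hi⟩ := supNorm_attained hd0 x
  have hX0 : 0 ≤ supNorm x := by rw [hi]; positivity
  set X := supNorm x with hX
  have hXsq : (x i : ℝ) ^ 2 = X ^ 2 := by rw [hi, sq_abs]
  set t : ℝ := X / r with ht
  have ht0 : 0 ≤ t := by positivity
  have hrd : A / (r:ℝ) ^ d ≤ A * d ^ d / σ ^ d := by
    rw [div_le_div_iff₀ (by positivity) (by positivity)]
    have : σ ^ d ≤ (d * r) ^ d := by gcongr
    rw [mul_pow] at this
    nlinarith
  have htσ : c₀ * (X / σ) ≤ t := by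
    rw [ht, ← mul_div_assoc, div_le_div_iff₀ (by positivity) (by positivity)]
    nlinarith
  have hcp : c₀ ^ (d - 2) ≤ 1 := pow_le_one₀ hc.le hc1
  have hG' : ∀ n : ℕ, 1 ≤ n → latIter K.J n x ≤ A / (r * √n) ^ d * Real.exp (-(t ^ 2 / (8 * n))) := by
    intro n hn
    have := hG r K.J hK n hn x i
    rw [hXsq] at this
    have e : X ^ 2 / (8 * r ^ 2 * n) = t ^ 2 / (8 * n) := by
      rw [ht]; field_simp
    rwa [e] at this
  constructor
  · have hm' : (1:ℝ) ≤ m := by exact_mod_cast hm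
    have hsm : 0 < √(m:ℝ) := Real.sqrt_pos.2 (by linarith)
    have e1 : (m:ℝ) ^ ((d:ℝ)/2) = √m ^ d := by
      rw [Real.sqrt_eq_rpow, ← Real.rpow_natCast, ← Real.rpow_mul (by positivity)]
      congr 1; ring
    rw [e1]
    refine (hG' m hm).trans ?_
    have h2 : Real.exp (-(t ^ 2 / (8 * m))) ≤ 2 * Real.exp (-(c₀ / 2) * X / (σ * √m)) := by
      have h3 : Real.exp (1/2) ≤ 2 := by
        have : Real.exp (1/2) ^ 2 = Real.exp 1 := by rw [← Real.exp_nat_mul]; norm_num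
        have h4 := Real.exp_one_lt_d9
        nlinarith [Real.exp_pos (1/2)]
      calc _ ≤ Real.exp (1/2) * Real.exp (-(c₀ / 2) * X / (σ * √m)) := by
            rw [← Real.exp_add]
            apply Real.exp_le_exp.2
            set u := t / √m with hu
            have e2 : t ^ 2 / (8 * m) = u ^ 2 / 8 := by
              rw [hu, div_pow t (√m), Real.sq_sqrt (by positivity)]; field_simp
            have e3 : -(c₀ / 2) * X / (σ * √m) = -(c₀ * (X / σ) / √m) / 2 := by field_simp
            have e4 : c₀ * (X / σ) / √m ≤ u := by rw [hu]; gcongr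
            rw [e2, e3]
            nlinarith [sq_nonneg (u - 2)]
        _ ≤ _ := by gcongr
    have h5 : 2 ≤ 4 * (16 * d : ℝ) ^ d := by
      have : (1:ℝ) ≤ (16 * d : ℝ) ^ d := one_le_pow₀ (by linarith)
      linarith
    calc _ ≤ A / (r * √m) ^ d * (2 * Real.exp (-(c₀ / 2) * X / (σ * √m))) := by gcongr
      _ = 2 * (A / r ^ d) * (1 / √m ^ d) * Real.exp (-(c₀ / 2) * X / (σ * √m)) := by
          rw [mul_pow]; field_simp
      _ ≤ (4 * (16 * d) ^ d) * (A * d ^ d / σ ^ d) * (1 / √m ^ d) * Real.exp (-(c₀ / 2) * X / (σ * √m)) := by gcongr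
      _ = (4 * (16 * d) ^ d * A * d ^ d / 1) / σ ^ d * (1 / √m ^ d) * Real.exp (-(c₀ / 2) * X / (σ * √m)) := by ring
      _ ≤ _ := by gcongr
  · have e1 : (σ / max σ X) ^ ((d:ℝ) - 2) = (σ / max σ X) ^ (d - 2) := by
      rw [← Real.rpow_natCast, Nat.cast_sub (by omega)]; norm_num
    rw [e1]
    have hmx : 0 < max σ X := lt_of_lt_of_le hσ0 (le_max_left _ _)
    have hT0 : 0 < max 1 t := lt_of_lt_of_le one_pos (le_max_left _ _)
    have hT : 1 / max 1 t ≤ (σ / max σ X) / c₀ := by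
      rw [div_div, div_le_div_iff₀ (by positivity) (by positivity), one_mul]
      rcases le_total σ X with h | h
      · rw [max_eq_right h]
        calc X * c₀ = σ * (c₀ * (X / σ)) := by field_simp
          _ ≤ σ * max 1 t := by gcongr; exact htσ.trans (le_max_right _ _)
      · rw [max_eq_left h]
        have : c₀ ≤ max 1 t := hc1.trans (le_max_left _ _)
        gcongr
    have hP0 : latIter K.J 0 x = if x = 0 then 1 else 0 := rfl
    have hQ : ∀ N : ℕ, ∑ n ∈ Finset.range (N + 1), β ^ n * latIter K.J n x ≤ (if x = 0 then 1 else 0) +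
          4 * (16 * d) ^ d * A * d ^ d / c₀ ^ (d - 2) / σ ^ d * (σ / max σ X) ^ (d - 2) *
            Real.exp (-(c₀ / 2) * √(1 - β) * X / σ) := by
      intro N
      refine (green_sum d hd (fun n => latIter K.J n x) A r t β hA hr ht0 hβ hG' N).trans ?_
      simp only [hP0]
      refine add_le_add le_rfl ?_
      have b1 : 1 / √(1 + t ^ 2) - 1 / √((N:ℝ) + 1 + t ^ 2) ≤ 1 / max 1 t := by
        have b2 : max 1 t ≤ √(1 + t ^ 2) := by
          apply max_le
          · rw [Real.one_le_sqrt]; nlinarith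
          · apply Real.le_sqrt_of_sq_le; linarith
        have b3 : 1 / √(1 + t ^ 2) ≤ 1 / max 1 t := by gcongr
        have : 0 ≤ 1 / √((N:ℝ) + 1 + t ^ 2) := by positivity
        linarith
      have b4 : Real.exp (-(√(1 - β) * t / 2)) ≤ Real.exp (-(c₀ / 2) * √(1 - β) * X / σ) := by
        apply Real.exp_le_exp.2
        have : √(1 - β) * (c₀ * (X / σ)) ≤ √(1 - β) * t := by gcongr
        have e : -(c₀ / 2) * √(1 - β) * X / σ = -(√(1 - β) * (c₀ * (X / σ)) / 2) := by ring
        rw [e]; linarith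
      have e5 : max 1 t ^ (d - 2) = max 1 t ^ (d - 3) * max 1 t := by rw [← pow_succ]; congr 1; omega
      calc _ ≤ A / r ^ d * Real.exp (-(√(1 - β) * t / 2)) * (4 * (16 * d) ^ d / max 1 t ^ (d - 3)) * (1 / max 1 t) := by
            gcongr
        _ ≤ A * d ^ d / σ ^ d * Real.exp (-(c₀ / 2) * √(1 - β) * X / σ) * (4 * (16 * d) ^ d / max 1 t ^ (d - 3)) * (1 / max 1 t) := by
            gcongr
        _ = A * d ^ d / σ ^ d * Real.exp (-(c₀ / 2) * √(1 - β) * X / σ) * (4 * (16 * d) ^ d) * (1 / max 1 t) ^ (d - 2) := by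
            rw [one_div_pow, e5]; field_simp
        _ ≤ A * d ^ d / σ ^ d * Real.exp (-(c₀ / 2) * √(1 - β) * X / σ) * (4 * (16 * d) ^ d) * ((σ / max σ X) / c₀) ^ (d - 2) := by
            gcongr
        _ = _ := by rw [div_pow _ c₀]; ring
    unfold latGreen
    apply ENNReal.tsum_le_of_sum_range_le
    intro N
    have hnn : ∀ n, 0 ≤ β ^ n * latIter K.J n x := fun n => mul_nonneg (pow_nonneg hβ.1 _) (hK.latIter_nonneg n x)
    rw [← ENNReal.ofReal_sum_of_nonneg fun n _ => hnn n]
    apply ENNReal.ofReal_le_ofReal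
    refine le_trans ?_ (hQ N)
    exact Finset.sum_le_sum_of_subset_of_nonneg (Finset.range_mono (by omega)) fun n _ _ => hnn n
end
end

section
/- Let d > 2 be an integer, J an admissible kernel on ℤ^d, and G ∈ 𝒢 with (J,G) satisfying Assumption G. Let 0 ≤ β' ≤ β < β_c and write Z := Z_{β',β}. Then for every integer T ≥ 1 and every x ∈ ℤ^d, G_β(x) ≤ ∑_{k=0}^{T−1} Z^k·E_{β'}[G_{β'}(x−X_k)] + Z^T·E_{β'}[G_β(x−X_T)]. If moreover Z < 1, then G_β(x) ≤ ∑_{k≥0} Z^k·E_{β'}[G_{β'}(x−X_k)]. The same two inequalities hold with G replaced by F = J*G throughout. -/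
open scoped ENNReal

noncomputable section

namespace Blackbox

/-- First coordinate (dot product with `e₁`). -/
def e1 {d : ℕ} {α : Type*} [Zero α] (y : Fin d → α) : α :=
  if h : 0 < d then y ⟨0, h⟩ else 0

/-- A family `G ∈ 𝒢` together with an admissible kernel `J` such that `(J,G)` satisfies
Assumption G (with error-term family `H`). -/
structure Model (d : ℕ) (c₀ : ℝ) where
  K : AdmissibleKernel d c₀
  G : ℝ → (Fin d → ℤ) → ℝ≥0∞
  βc : ℝ≥0∞
  βc_pos : 0 < βc
  init : ∀ x, G 0 x = if x = 0 then 1 else 0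
  G' : ℝ → (Fin d → ℤ) → ℝ
  mono : ∀ (x : Fin d → ℤ) ⦃β₁ β₂ : ℝ⦄, 0 ≤ β₁ → β₁ ≤ β₂ →
    ENNReal.ofReal β₂ ≤ βc → G β₁ x ≤ G β₂ x
  deriv : ∀ (x : Fin d → ℤ) ⦃β : ℝ⦄, 0 ≤ β → ENNReal.ofReal β < βc →
    HasDerivWithinAt (fun t => (G t x).toReal) (G' β x) (Set.Ici 0) β
  symm : ∀ β, IsSymmFun (G β)
  expDecay : ∀ ⦃β : ℝ⦄, 0 ≤ β → ENNReal.ofReal β < βc →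
    ∃ C > (0:ℝ), ∃ c > (0:ℝ), ∀ x, G β x ≤ ENNReal.ofReal (C * Real.exp (-c * supNorm x))
  limit : βc ≠ ⊤ → ∀ x, G βc.toReal x = ⨆ β ∈ Set.Ico (0 : ℝ) βc.toReal, G β x
  I1 : ∀ ⦃β' β : ℝ⦄, 0 ≤ β' → β' ≤ β → ENNReal.ofReal β < βc →
    ∀ x, G β x ≤ G β' x + ENNReal.ofReal (β - β') *
      ∑' p : (Fin d → ℤ) × (Fin d → ℤ),
        G β' p.1 * ENNReal.ofReal (K.J p.2) * G β (x - p.1 - p.2)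
  H : ℝ → (Fin d → ℤ) → ℝ
  H_nonneg : ∀ β x, 0 ≤ H β x
  H_zero : ∀ x, H 0 x = 0
  H_symm : ∀ β x, H β (-x) = H β x
  H_cont : ∀ x, ContinuousOn (fun β => H β x)
    {β : ℝ | 0 ≤ β ∧ ENNReal.ofReal β < βc}
  H_expDecay : ∀ ⦃β : ℝ⦄, 0 ≤ β → ENNReal.ofReal β < βc →
    ∃ C > (0:ℝ), ∃ c > (0:ℝ), ∀ x, H β x ≤ C * Real.exp (-c * supNorm x)
  I2 : ∀ ⦃β : ℝ⦄, 0 ≤ β → ENNReal.ofReal β < βc → ∀ x,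
    (∑' p : (Fin d → ℤ) × (Fin d → ℤ),
      (G β p.1).toReal * (K.J p.2 - H β p.2) * (G β (x - p.1 - p.2)).toReal)
      ≤ G' β x

namespace Model

variable {d : ℕ} {c₀ : ℝ}

def sigma (M : Model d c₀) : ℝ := M.K.sigma

/-- `F_β = J * G_β`. -/
def F (M : Model d c₀) (β : ℝ) (x : Fin d → ℤ) : ℝ≥0∞ :=
  ∑' y, ENNReal.ofReal (M.K.J y) * M.G β (x - y)

/-- The susceptibility `χ(β)`. -/
def chi (M : Model d c₀) (β : ℝ) : ℝ≥0∞ := ∑' x, M.G β x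

/-- `ξ(β)²`. -/
def xiSq (M : Model d c₀) (β : ℝ) : ℝ≥0∞ :=
  (∑' x, ENNReal.ofReal (sqNorm x) * M.F β x) / M.chi β

/-- The correlation length of order two, `ξ(β)`. -/
def xi (M : Model d c₀) (β : ℝ) : ℝ := Real.sqrt (M.xiSq β).toReal

/-- The error term `E(β)`. -/
def E (M : Model d c₀) (β : ℝ) : ℝ≥0∞ :=
  ⨆ t ∈ Set.Icc (0 : ℝ) β,
    (ENNReal.ofReal (∑' x, M.H t x) +
      ENNReal.ofReal (∑' x, sqNorm x * M.H t x) / M.xiSq t)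

/-- `β(δ)`. -/
def betaOf (M : Model d c₀) (δ : ℝ) : ℝ :=
  sSup {β : ℝ | 0 ≤ β ∧ ENNReal.ofReal β < M.βc ∧ M.E β < ENNReal.ofReal δ}

/-- One-step distribution of the effective random walk at parameter `β`. -/
def effStep (M : Model d c₀) (β : ℝ) (y : Fin d → ℤ) : ℝ≥0∞ :=
  M.F β y / M.chi β

/-- `k`-step distribution of the effective random walk at parameter `β`. -/
def effIter (M : Model d c₀) (β : ℝ) : ℕ → (Fin d → ℤ) → ℝ≥0∞
  | 0 => fun x => if x = 0 then 1 else 0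
  | n + 1 => fun x => ∑' y, M.effStep β y * M.effIter β n (x - y)

/-- Moment generating function `M_β(s)` of the first coordinate of one step of the
effective random walk. -/
def Mgf (M : Model d c₀) (β s : ℝ) : ℝ≥0∞ :=
  ∑' y : Fin d → ℤ, M.effStep β y * ENNReal.ofReal (Real.exp (s / M.xi β * ((e1 y : ℤ) : ℝ)))

end Model

end Blackbox
namespace Blackbox
open Finset

lemma tsum_pi_pow (f : ℤ → ℝ≥0∞) (n : ℕ) :
    ∑' x : Fin n → ℤ, ∏ i, f (x i) = (∑' k, f k) ^ n := by
  induction n with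
  | zero => simp
  | succ n ih =>
    rw [← (Fin.consEquiv (fun _ : Fin (n + 1) => ℤ)).tsum_eq, ENNReal.tsum_prod']
    simp only [Fin.consEquiv, Equiv.coe_fn_mk, Fin.prod_univ_succ, Fin.cons_zero, Fin.cons_succ]
    simp_rw [ENNReal.tsum_mul_left, ih, ENNReal.tsum_mul_right]
    rw [pow_succ, mul_comm]

lemma tsum_exp_ne_top {d : ℕ} (hd : 0 < d) (c : ℝ) (hc : 0 < c) :
    ∑' x : Fin d → ℤ, ENNReal.ofReal (Real.exp (-c * supNorm x)) ≠ ⊤ := by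
  set a : ℝ := c / d with ha
  have hd' : (0:ℝ) < d := by exact_mod_cast hd
  have ha0 : 0 < a := by positivity
  have h1 : Summable (fun k : ℤ => Real.exp (-a * (k.natAbs : ℝ))) := by
    have hs : Summable (fun n : ℕ => Real.exp (-a * (n:ℝ))) := by
      have := Real.summable_exp_nat_mul_iff.mpr (show -a < 0 by linarith)
      simpa [mul_comm] using this
    apply Summable.of_nat_of_neg
    · simpa using hs
    · simpa using hs
  have h2 : ∑' k : ℤ, ENNReal.ofReal (Real.exp (-a * (k.natAbs : ℝ))) ≠ ⊤ :=
    h1.tsum_ofReal_ne_top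
  refine ne_top_of_le_ne_top (ENNReal.pow_ne_top h2 (n := d)) ?_
  rw [← tsum_pi_pow]
  refine ENNReal.tsum_le_tsum fun x => ?_
  rw [← ENNReal.ofReal_prod_of_nonneg (fun i _ => (Real.exp_pos _).le), ← Real.exp_sum]
  apply ENNReal.ofReal_le_ofReal
  apply Real.exp_le_exp.mpr
  have h3 : ∀ i, ((x i).natAbs : ℝ) ≤ supNorm x := by
    intro i
    unfold supNorm
    exact_mod_cast Finset.le_sup (f := fun i => (x i).natAbs) (Finset.mem_univ i)
  have h4 : ∑ i : Fin d, -a * supNorm x = -c * supNorm x := by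
    simp [ha]; field_simp
  rw [← h4]
  exact Finset.sum_le_sum fun i _ => by nlinarith [h3 i]

section abs
variable {A : Type*} [AddCommGroup A]

/-- Convolution. -/
def cv (f g : A → ℝ≥0∞) (x : A) : ℝ≥0∞ := ∑' y, f y * g (x - y)

lemma cv_mono (f : A → ℝ≥0∞) {g h : A → ℝ≥0∞} (hh : ∀ x, g x ≤ h x) (x : A) :
    cv f g x ≤ cv f h x :=
  ENNReal.tsum_le_tsum fun y => by gcongr; exact hh _

lemma cv_add (f g h : A → ℝ≥0∞) (x : A) :
    cv f (fun y => g y + h y) x = cv f g x + cv f h x := by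
  simp only [cv, mul_add]; exact ENNReal.tsum_add

lemma cv_smul (f g : A → ℝ≥0∞) (c : ℝ≥0∞) (x : A) :
    cv f (fun y => c * g y) x = c * cv f g x := by
  simp only [cv, ← ENNReal.tsum_mul_left]
  exact tsum_congr fun y => by ring

lemma cv_assoc (f g h : A → ℝ≥0∞) (x : A) : cv (cv f g) h x = cv f (cv g h) x := by
  simp only [cv, ← ENNReal.tsum_mul_left, ← ENNReal.tsum_mul_right]
  rw [ENNReal.tsum_comm]
  refine tsum_congr fun y => ?_
  rw [← (Equiv.addRight y).tsum_eq]
  refine tsum_congr fun w => ?_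
  simp only [Equiv.coe_addRight, add_sub_cancel_right, mul_assoc]
  congr 3
  abel

lemma cv_comm (f g : A → ℝ≥0∞) : cv f g = cv g f := by
  ext x
  simp only [cv]
  rw [← (Equiv.subLeft x).tsum_eq]
  refine tsum_congr fun w => ?_
  simp [mul_comm]

lemma cv_mass (f g : A → ℝ≥0∞) : ∑' x, cv f g x = (∑' x, f x) * ∑' x, g x := by
  simp only [cv]
  rw [ENNReal.tsum_comm, ← ENNReal.tsum_mul_right]
  refine tsum_congr fun y => ?_
  rw [ENNReal.tsum_mul_left]
  congr 1
  exact (Equiv.subRight y).tsum_eq g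

lemma cv_le (f g : A → ℝ≥0∞) (hf : ∑' x, f x ≤ 1) (C : ℝ≥0∞) (hg : ∀ x, g x ≤ C) (x : A) :
    cv f g x ≤ C := by
  calc cv f g x ≤ ∑' y, f y * C := ENNReal.tsum_le_tsum fun y => by gcongr; exact hg _
    _ = (∑' y, f y) * C := ENNReal.tsum_mul_right
    _ ≤ 1 * C := by gcongr
    _ = C := one_mul C

lemma iterate_bound (s : A → ℝ≥0∞) (e : ℕ → A → ℝ≥0∞) (he0 : ∀ g x, cv (e 0) g x = g x)
    (hes : ∀ n, e (n + 1) = cv s (e n)) (u v : A → ℝ≥0∞) (Z : ℝ≥0∞)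
    (huv : ∀ x, u x ≤ v x + Z * cv s u x) (T : ℕ) (x : A) :
    u x ≤ (∑ k ∈ Finset.range T, Z ^ k * cv (e k) v x) + Z ^ T * cv (e T) u x := by
  induction T with
  | zero => simp [he0]
  | succ T ih =>
    refine ih.trans ?_
    rw [Finset.sum_range_succ, add_assoc]
    gcongr
    calc Z ^ T * cv (e T) u x ≤ Z ^ T * cv (e T) (fun x => v x + Z * cv s u x) x := by
          gcongr; exact cv_mono _ huv x
      _ = Z ^ T * (cv (e T) v x + Z * cv (e (T + 1)) u x) := by
          rw [cv_add, cv_smul, hes, cv_comm s (e T), cv_assoc]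
      _ = _ := by ring

lemma iterate_bound_inf (s : A → ℝ≥0∞) (e : ℕ → A → ℝ≥0∞) (he0 : ∀ g x, cv (e 0) g x = g x)
    (hes : ∀ n, e (n + 1) = cv s (e n)) (u v : A → ℝ≥0∞) (Z : ℝ≥0∞)
    (huv : ∀ x, u x ≤ v x + Z * cv s u x)
    (he : ∀ n, ∑' x, e n x ≤ 1) (C : ℝ≥0∞) (hC : C ≠ ⊤) (hu : ∀ x, u x ≤ C) (hZ : Z < 1) (x : A) :
    u x ≤ ∑' k : ℕ, Z ^ k * cv (e k) v x := by
  have hT : ∀ T : ℕ, u x ≤ (∑' k : ℕ, Z ^ k * cv (e k) v x) + Z ^ T * C := fun T =>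
    (iterate_bound s e he0 hes u v Z huv T x).trans
      (add_le_add (ENNReal.sum_le_tsum _) (mul_le_mul_right (cv_le _ _ (he T) C hu x) _))
  have hlim : Filter.Tendsto (fun T : ℕ => (∑' k : ℕ, Z ^ k * cv (e k) v x) + Z ^ T * C)
      Filter.atTop (nhds ((∑' k : ℕ, Z ^ k * cv (e k) v x) + 0 * C)) :=
    Filter.Tendsto.add tendsto_const_nhds
      (ENNReal.Tendsto.mul_const (ENNReal.tendsto_pow_atTop_nhds_zero_of_lt_one hZ) (Or.inr hC))
  have := ge_of_tendsto' hlim hT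
  simpa using this

end abs

namespace Model
variable {d : ℕ} {c₀ : ℝ}

lemma F_eq (M : Model d c₀) (β : ℝ) :
    M.F β = cv (fun y => ENNReal.ofReal (M.K.J y)) (M.G β) := rfl

lemma J_mass (M : Model d c₀) : ∑' y, ENNReal.ofReal (M.K.J y) = 1 := by
  rw [← ENNReal.ofReal_tsum_of_nonneg M.K.nonneg M.K.summable, M.K.norm_one, ENNReal.ofReal_one]

lemma F_mass (M : Model d c₀) (β : ℝ) : ∑' y, M.F β y = M.chi β := by
  rw [F_eq, cv_mass, J_mass, one_mul, chi]

lemma chi_ne_top (M : Model d c₀) (hd : 0 < d) {β : ℝ} (h0 : 0 ≤ β)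
    (h : ENNReal.ofReal β < M.βc) : M.chi β ≠ ⊤ := by
  obtain ⟨C, hC, c, hc, hb⟩ := M.expDecay h0 h
  refine ne_top_of_le_ne_top ?_ (ENNReal.tsum_le_tsum hb)
  simp_rw [ENNReal.ofReal_mul hC.le, ENNReal.tsum_mul_left]
  exact ENNReal.mul_ne_top ENNReal.ofReal_ne_top (tsum_exp_ne_top hd c hc)

lemma chi_ne_zero (M : Model d c₀) {β : ℝ} (h0 : 0 ≤ β)
    (h : ENNReal.ofReal β < M.βc) : M.chi β ≠ 0 := by
  have h1 : M.G 0 0 ≤ M.G β 0 := M.mono 0 le_rfl h0 h.le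
  have h2 : M.G β 0 ≤ M.chi β := ENNReal.le_tsum 0
  rw [M.init, if_pos rfl] at h1
  intro h3
  rw [h3] at h2
  exact absurd (h1.trans h2) (by simp)

lemma effIter_zero (M : Model d c₀) (β : ℝ) (g : (Fin d → ℤ) → ℝ≥0∞) (x : Fin d → ℤ) :
    cv (M.effIter β 0) g x = g x := by
  simp only [cv, effIter]
  rw [tsum_eq_single 0]
  · simp
  · intro b hb; simp [hb]

lemma effIter_mass (M : Model d c₀) (β : ℝ) (n : ℕ) : ∑' x, M.effIter β n x ≤ 1 := by
  induction n with
  | zero => simp [effIter]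
  | succ n ih =>
    change ∑' x, cv (M.effStep β) (M.effIter β n) x ≤ 1
    rw [cv_mass]
    have : ∑' x, M.effStep β x ≤ 1 := by
      simp only [effStep, div_eq_mul_inv]
      rw [ENNReal.tsum_mul_right, F_mass, ← div_eq_mul_inv]
      exact ENNReal.div_self_le_one
    exact mul_le_one' this ih

lemma step_G (M : Model d c₀) (hd : 0 < d) {β' β : ℝ} (h0 : 0 ≤ β') (hle : β' ≤ β)
    (h : ENNReal.ofReal β < M.βc) (x : Fin d → ℤ) :
    M.G β x ≤ M.G β' x +
      ENNReal.ofReal (β - β') * M.chi β' * cv (M.effStep β') (M.G β) x := by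
  have h' : ENNReal.ofReal β' < M.βc := (ENNReal.ofReal_le_ofReal hle).trans_lt h
  refine (M.I1 h0 hle h x).trans (le_of_eq ?_)
  congr 1
  rw [mul_assoc]
  congr 1
  have h1 : M.chi β' * cv (M.effStep β') (M.G β) x = cv (M.F β') (M.G β) x := by
    simp only [cv, ← ENNReal.tsum_mul_left]
    refine tsum_congr fun y => ?_
    rw [← mul_assoc, effStep, ENNReal.mul_div_cancel (M.chi_ne_zero h0 h') (M.chi_ne_top hd h0 h')]
  rw [h1, F_eq, cv_comm (fun y => ENNReal.ofReal (M.K.J y)), cv_assoc, ENNReal.tsum_prod']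
  simp only [cv, ← ENNReal.tsum_mul_left, mul_assoc]

lemma step_F (M : Model d c₀) (hd : 0 < d) {β' β : ℝ} (h0 : 0 ≤ β') (hle : β' ≤ β)
    (h : ENNReal.ofReal β < M.βc) (x : Fin d → ℤ) :
    M.F β x ≤ M.F β' x +
      ENNReal.ofReal (β - β') * M.chi β' * cv (M.effStep β') (M.F β) x := by
  rw [F_eq, F_eq]
  refine (cv_mono _ (M.step_G hd h0 hle h) x).trans (le_of_eq ?_)
  rw [cv_add, cv_smul, ← cv_assoc, ← cv_assoc, cv_comm (M.effStep β')]

end Model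
end Blackbox

open Blackbox

/-- iterated Simon–Lieb inequalities for the effective random walk
(`lem: iterated SL`). -/
theorem statement9 (d : ℕ) (hd : 2 < d) (c₀ : ℝ) (hc₀ : c₀ ∈ Set.Ioc (0:ℝ) 1)
    (M : Model d c₀) (β' β : ℝ) (hβ'0 : 0 ≤ β') (hβ'β : β' ≤ β)
    (hβ : ENNReal.ofReal β < M.βc) :
    (∀ T : ℕ, 1 ≤ T → ∀ x : Fin d → ℤ,
      M.G β x ≤ (∑ k ∈ Finset.range T, (ENNReal.ofReal (β - β') * M.chi β') ^ k *
          ∑' z, M.effIter β' k z * M.G β' (x - z)) +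
        (ENNReal.ofReal (β - β') * M.chi β') ^ T *
          ∑' z, M.effIter β' T z * M.G β (x - z)) ∧
    (ENNReal.ofReal (β - β') * M.chi β' < 1 → ∀ x : Fin d → ℤ,
      M.G β x ≤ ∑' k : ℕ, (ENNReal.ofReal (β - β') * M.chi β') ^ k *
          ∑' z, M.effIter β' k z * M.G β' (x - z)) ∧
    (∀ T : ℕ, 1 ≤ T → ∀ x : Fin d → ℤ,
      M.F β x ≤ (∑ k ∈ Finset.range T, (ENNReal.ofReal (β - β') * M.chi β') ^ k *
          ∑' z, M.effIter β' k z * M.F β' (x - z)) +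
        (ENNReal.ofReal (β - β') * M.chi β') ^ T *
          ∑' z, M.effIter β' T z * M.F β (x - z)) ∧
    (ENNReal.ofReal (β - β') * M.chi β' < 1 → ∀ x : Fin d → ℤ,
      M.F β x ≤ ∑' k : ℕ, (ENNReal.ofReal (β - β') * M.chi β') ^ k *
          ∑' z, M.effIter β' k z * M.F β' (x - z)) := by
  have hd0 : 0 < d := by omega
  obtain ⟨C, hC, c, hc, hb⟩ := M.expDecay (hβ'0.trans hβ'β) hβ
  have hG : ∀ x, M.G β x ≤ ENNReal.ofReal C := fun x => by
    refine (hb x).trans (ENNReal.ofReal_le_ofReal ?_)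
    have hs : 0 ≤ supNorm x := by unfold supNorm; positivity
    have : Real.exp (-c * supNorm x) ≤ 1 := Real.exp_le_one_iff.mpr (by nlinarith)
    nlinarith
  have hF : ∀ x, M.F β x ≤ ENNReal.ofReal C := fun x =>
    cv_le _ _ M.J_mass.le _ hG x
  exact ⟨fun T _ x => iterate_bound (M.effStep β') (M.effIter β') (M.effIter_zero β')
      (fun n => rfl) _ _ _ (M.step_G hd0 hβ'0 hβ'β hβ) T x,
    fun hZ x => iterate_bound_inf (M.effStep β') (M.effIter β') (M.effIter_zero β')
      (fun n => rfl) _ _ _ (M.step_G hd0 hβ'0 hβ'β hβ) (M.effIter_mass β') _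
      ENNReal.ofReal_ne_top hG hZ x,
    fun T _ x => iterate_bound (M.effStep β') (M.effIter β') (M.effIter_zero β')
      (fun n => rfl) _ _ _ (M.step_F hd0 hβ'0 hβ'β hβ) T x,
    fun hZ x => iterate_bound_inf (M.effStep β') (M.effIter β') (M.effIter_zero β')
      (fun n => rfl) _ _ _ (M.step_F hd0 hβ'0 hβ'β hβ) (M.effIter_mass β') _
      ENNReal.ofReal_ne_top hF hZ x⟩
end
end

section
/- Let d > 2 be an integer, J an admissible kernel on ℤ^d, and G ∈ 𝒢 with (J,G) satisfying Assumption G. Let 0 ≤ β' ≤ β < β_c and s ∈ ℝ. If Z_{β',β}·M_{β'}(s·ξ(β')/ξ(β)) < 1, then M_β(s) ≤ (χ(β')/χ(β)) · M_{β'}(s·ξ(β')/ξ(β)) / (1 − Z_{β',β}·M_{β'}(s·ξ(β')/ξ(β))). -/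
open scoped ENNReal

noncomputable section

open Blackbox

namespace Aux

section conv
variable {V : Type*} [AddCommGroup V]

lemma tsum_conv (φ f g : V → ℝ≥0∞) (hφ : ∀ x y, φ (x + y) = φ x * φ y) :
    ∑' x, φ x * ∑' y, f y * g (x - y) = (∑' y, φ y * f y) * ∑' z, φ z * g z := by
  calc ∑' x, φ x * ∑' y, f y * g (x - y)
      = ∑' x, ∑' y, φ x * (f y * g (x - y)) := by simp_rw [ENNReal.tsum_mul_left]
    _ = ∑' y, ∑' x, φ x * (f y * g (x - y)) := ENNReal.tsum_comm
    _ = ∑' y, ∑' z, (φ y * f y) * (φ z * g z) := by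
        refine tsum_congr fun y => ?_
        rw [← (Equiv.addRight y).tsum_eq]
        refine tsum_congr fun z => ?_
        simp only [Equiv.coe_addRight, add_sub_cancel_right, hφ]
        ring
    _ = _ := by simp_rw [ENNReal.tsum_mul_left, ENNReal.tsum_mul_right]

def it (g' f : V → ℝ≥0∞) : ℕ → V → ℝ≥0∞
  | 0 => fun _ => 0
  | n + 1 => fun x => g' x + ∑' y, f y * it g' f n (x - y)

lemma key (φ f g g' : V → ℝ≥0∞) (hφ : ∀ x y, φ (x + y) = φ x * φ y)
    (hφt : ∀ x, φ x ≠ ⊤) (C : ℝ≥0∞) (hC : C ≠ ⊤) (hgC : ∀ x, g x ≤ C)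
    (hθ : ∑' y, f y < 1) (hf : ∑' y, φ y * f y < 1)
    (hg : ∀ x, g x ≤ g' x + ∑' y, f y * g (x - y)) :
    ∑' x, φ x * g x ≤ (∑' x, φ x * g' x) / (1 - ∑' y, φ y * f y) := by
  set θ := ∑' y, f y with hθd
  set r := ∑' y, φ y * f y with hr
  set A := ∑' x, φ x * g' x with hA
  have h1 : ∀ n x, g x ≤ it g' f n x + C * θ ^ n := by
    intro n
    induction n with
    | zero => intro x; simpa [it] using hgC x
    | succ n ih =>
      intro x
      calc g x ≤ g' x + ∑' y, f y * g (x - y) := hg x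
        _ ≤ g' x + ∑' y, f y * (it g' f n (x - y) + C * θ ^ n) := by
          gcongr with y; exact ih _
        _ = it g' f (n+1) x + C * θ ^ (n+1) := by
          simp_rw [mul_add, ENNReal.tsum_add, ENNReal.tsum_mul_right]
          simp only [it, ← hθd]
          ring
  have hr0 : 1 - r ≠ 0 := by simpa [tsub_eq_zero_iff_le] using hf
  have hrt : 1 - r ≠ ⊤ := ne_top_of_le_ne_top ENNReal.one_ne_top tsub_le_self
  have hU : A + r * (A / (1 - r)) = A / (1 - r) := by
    have e : A = (1 - r) * (A / (1 - r)) := (ENNReal.mul_div_cancel hr0 hrt).symm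
    nth_rewrite 1 [e]
    rw [← add_mul, tsub_add_cancel_of_le hf.le, one_mul]
  have h2 : ∀ n, ∑' x, φ x * it g' f n x ≤ A / (1 - r) := by
    intro n
    induction n with
    | zero => simp [it]
    | succ n ih =>
      simp only [it, mul_add, ENNReal.tsum_add, tsum_conv φ f _ hφ]
      rw [← hr, ← hA]
      calc A + r * _ ≤ A + r * (A / (1 - r)) := by gcongr
        _ = _ := hU
  rw [ENNReal.tsum_eq_iSup_sum]
  refine iSup_le fun S => ?_
  have h3 : ∀ n, ∑ x ∈ S, φ x * g x ≤ A / (1 - r) + (∑ x ∈ S, φ x) * C * θ ^ n := by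
    intro n
    calc ∑ x ∈ S, φ x * g x ≤ ∑ x ∈ S, φ x * (it g' f n x + C * θ ^ n) := by
          gcongr with x; exact h1 n x
      _ = ∑ x ∈ S, φ x * it g' f n x + (∑ x ∈ S, φ x) * C * θ ^ n := by
          simp_rw [mul_add, Finset.sum_add_distrib, Finset.sum_mul, mul_assoc]
      _ ≤ _ := by
          gcongr
          exact (ENNReal.sum_le_tsum S).trans (h2 n)
  have hD : (∑ x ∈ S, φ x) * C ≠ ⊤ :=
    ENNReal.mul_ne_top (ENNReal.sum_ne_top.2 fun x _ => hφt x) hC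
  have ht : Filter.Tendsto (fun n : ℕ => A / (1 - r) + (∑ x ∈ S, φ x) * C * θ ^ n)
      Filter.atTop (nhds (A / (1 - r) + (∑ x ∈ S, φ x) * C * 0)) :=
    tendsto_const_nhds.add
      (ENNReal.Tendsto.const_mul (ENNReal.tendsto_pow_atTop_nhds_zero_of_lt_one hθ) (Or.inr hD))
  rw [mul_zero, add_zero] at ht
  exact ge_of_tendsto' ht h3

end conv

lemma tsum_prod_pi (h : ℤ → ℝ≥0∞) (d : ℕ) :
    ∑' x : Fin d → ℤ, ∏ i, h (x i) = (∑' k, h k) ^ d := by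
  induction d with
  | zero => simp [tsum_fintype]
  | succ n ih =>
    rw [← (Fin.consEquiv (fun _ : Fin (n+1) => ℤ)).tsum_eq, ENNReal.tsum_prod']
    simp only [Fin.consEquiv, Equiv.coe_fn_mk, Fin.prod_univ_succ, Fin.cons_zero, Fin.cons_succ]
    simp_rw [ENNReal.tsum_mul_left]
    rw [ih, ENNReal.tsum_mul_right, pow_succ']

lemma natAbs_le_supNorm {d : ℕ} (x : Fin d → ℤ) (i : Fin d) : ((x i).natAbs : ℝ) ≤ supNorm x := by
  unfold supNorm
  exact_mod_cast Finset.le_sup (f := fun i => (x i).natAbs) (Finset.mem_univ i)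

lemma supNorm_nonneg {d : ℕ} (x : Fin d → ℤ) : 0 ≤ supNorm x := by
  unfold supNorm; positivity

lemma tsum_exp_supNorm {d : ℕ} (hd : 0 < d) (c : ℝ) (hc : 0 < c) :
    ∑' x : Fin d → ℤ, ENNReal.ofReal (Real.exp (-c * supNorm x)) ≠ ⊤ := by
  set a := c / d with ha
  have hd' : (0:ℝ) < d := by exact_mod_cast hd
  have ha0 : 0 < a := by positivity
  have hs : Summable fun k : ℤ => Real.exp (-a * (k.natAbs : ℝ)) := by
    have hn : Summable fun n : ℕ => Real.exp (-a * (n : ℝ)) := by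
      have := Real.summable_exp_nat_mul_iff (a := -a)
      simp_rw [mul_comm (-a)]
      exact this.2 (by linarith)
    refine Summable.of_nat_of_neg (by simpa using hn) (by simpa using hn)
  have hb : ∀ x : Fin d → ℤ, ENNReal.ofReal (Real.exp (-c * supNorm x)) ≤
      ∏ i, ENNReal.ofReal (Real.exp (-a * ((x i).natAbs : ℝ))) := by
    intro x
    rw [← ENNReal.ofReal_prod_of_nonneg (fun i _ => (Real.exp_pos _).le), ← Real.exp_sum]
    apply ENNReal.ofReal_le_ofReal
    apply Real.exp_le_exp.2
    rw [← Finset.mul_sum]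
    have : ∑ i, ((x i).natAbs : ℝ) ≤ d * supNorm x := by
      calc _ ≤ ∑ i : Fin d, supNorm x := Finset.sum_le_sum fun i _ => natAbs_le_supNorm x i
        _ = _ := by simp
    have h2 : a * ∑ i, ((x i).natAbs : ℝ) ≤ a * (d * supNorm x) := by gcongr
    have h3 : a * (d * supNorm x) = c * supNorm x := by rw [ha]; field_simp
    linarith
  refine ne_top_of_le_ne_top ?_ (ENNReal.tsum_le_tsum hb)
  rw [tsum_prod_pi (fun k : ℤ => ENNReal.ofReal (Real.exp (-a * (k.natAbs : ℝ))))]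
  exact ENNReal.pow_ne_top hs.tsum_ofReal_ne_top

lemma sqNorm_nonneg {d : ℕ} (x : Fin d → ℤ) : 0 ≤ sqNorm x := by
  unfold sqNorm; positivity

lemma sqNorm_le_exp {d : ℕ} (c : ℝ) (hc : 0 < c) (x : Fin d → ℤ) :
    sqNorm x * Real.exp (-c * supNorm x) ≤ (d * (8 / c ^ 2)) * Real.exp (-(c/2) * supNorm x) := by
  have h0 := supNorm_nonneg x
  have h1 : sqNorm x ≤ d * supNorm x ^ 2 := by
    unfold sqNorm
    calc _ ≤ ∑ i : Fin d, supNorm x ^ 2 := by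
          refine Finset.sum_le_sum fun i _ => ?_
          have := natAbs_le_supNorm x i
          rw [Nat.cast_natAbs, Int.cast_abs] at this
          rw [← sq_abs]
          gcongr
      _ = _ := by simp
  have h2 : (c / 2 * supNorm x) ^ 2 / 2 ≤ Real.exp (c / 2 * supNorm x) := by
    have := Real.quadratic_le_exp_of_nonneg (x := c / 2 * supNorm x) (by positivity)
    nlinarith [show 0 ≤ c / 2 * supNorm x by positivity]
  have h3 : supNorm x ^ 2 ≤ 8 / c ^ 2 * Real.exp (c / 2 * supNorm x) := by
    have : supNorm x ^ 2 = 8 / c ^ 2 * ((c / 2 * supNorm x) ^ 2 / 2) := by field_simp; ring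
    rw [this]; gcongr
  have h4 : Real.exp (-(c/2) * supNorm x) =
      Real.exp (c / 2 * supNorm x) * Real.exp (-c * supNorm x) := by
    rw [← Real.exp_add]; congr 1; ring
  rw [h4, ← mul_assoc]
  gcongr
  calc sqNorm x ≤ d * supNorm x ^ 2 := h1
    _ ≤ d * (8 / c ^ 2 * Real.exp (c / 2 * supNorm x)) := by gcongr
    _ = _ := by ring

lemma sqNorm_add_le {d : ℕ} (x y : Fin d → ℤ) : sqNorm (x + y) ≤ 2 * sqNorm x + 2 * sqNorm y := by
  unfold sqNorm
  rw [Finset.mul_sum, Finset.mul_sum, ← Finset.sum_add_distrib]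
  refine Finset.sum_le_sum fun i _ => ?_
  simp only [Pi.add_apply, Int.cast_add]
  nlinarith [sq_nonneg ((x i : ℝ) - y i)]

lemma symm_neg {d : ℕ} {α : Type*} {f : (Fin d → ℤ) → α} (h : IsSymmFun f) (x) : f (-x) = f x := by
  rw [← h 1 (fun _ => true) x]
  congr 1
  ext i; simp

variable {d : ℕ} {c₀ : ℝ} (M : Model d c₀)

lemma F_neg (β : ℝ) (x) : M.F β (-x) = M.F β x := by
  unfold Model.F
  rw [← (Equiv.neg _).tsum_eq]
  refine tsum_congr fun y => ?_
  simp only [Equiv.neg_apply]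
  rw [symm_neg M.K.symm, ← symm_neg (M.symm β)]
  congr 2; abel

lemma chi_ne_top (hd : 0 < d) {β : ℝ} (h0 : 0 ≤ β) (hβ : ENNReal.ofReal β < M.βc) :
    M.chi β ≠ ⊤ := by
  obtain ⟨C, hC, c, hc, h⟩ := M.expDecay h0 hβ
  refine ne_top_of_le_ne_top ?_ (ENNReal.tsum_le_tsum h)
  simp_rw [ENNReal.ofReal_mul hC.le, ENNReal.tsum_mul_left]
  exact ENNReal.mul_ne_top ENNReal.ofReal_ne_top (tsum_exp_supNorm hd c hc)

lemma tsum_sq_G (hd : 0 < d) {β : ℝ} (h0 : 0 ≤ β) (hβ : ENNReal.ofReal β < M.βc) :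
    ∑' x, ENNReal.ofReal (sqNorm x) * M.G β x ≠ ⊤ := by
  obtain ⟨C, hC, c, hc, h⟩ := M.expDecay h0 hβ
  have : ∀ x, ENNReal.ofReal (sqNorm x) * M.G β x ≤
      ENNReal.ofReal (C * (d * (8 / c ^ 2))) * ENNReal.ofReal (Real.exp (-(c/2) * supNorm x)) := by
    intro x
    calc _ ≤ ENNReal.ofReal (sqNorm x) * ENNReal.ofReal (C * Real.exp (-c * supNorm x)) := by
          gcongr; exact h x
      _ = ENNReal.ofReal (C * (sqNorm x * Real.exp (-c * supNorm x))) := by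
          rw [← ENNReal.ofReal_mul (sqNorm_nonneg x)]; congr 1; ring
      _ ≤ ENNReal.ofReal (C * ((d * (8 / c ^ 2)) * Real.exp (-(c/2) * supNorm x))) := by
          apply ENNReal.ofReal_le_ofReal
          exact mul_le_mul_of_nonneg_left (sqNorm_le_exp c hc x) hC.le
      _ = _ := by
          rw [← ENNReal.ofReal_mul (by positivity)]; congr 1; ring
  refine ne_top_of_le_ne_top ?_ (ENNReal.tsum_le_tsum this)
  rw [ENNReal.tsum_mul_left]
  exact ENNReal.mul_ne_top ENNReal.ofReal_ne_top (tsum_exp_supNorm hd _ (by positivity))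

lemma tsum_sq_F (hd : 0 < d) {β : ℝ} (h0 : 0 ≤ β) (hβ : ENNReal.ofReal β < M.βc) :
    ∑' x, ENNReal.ofReal (sqNorm x) * M.F β x ≠ ⊤ := by
  set j := fun y => ENNReal.ofReal (M.K.J y) with hj
  have hjs : ∑' y, j y ≠ ⊤ := M.K.summable.tsum_ofReal_ne_top
  have hjq : ∑' y, ENNReal.ofReal (sqNorm y) * j y ≠ ⊤ := by
    have := M.K.summable_sq.tsum_ofReal_ne_top
    simpa only [ENNReal.ofReal_mul (sqNorm_nonneg _)] using this
  have e : ∑' x, ENNReal.ofReal (sqNorm x) * M.F β x ≤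
      ∑' y, ∑' z, (2 * (ENNReal.ofReal (sqNorm y) * j y) * M.G β z
        + 2 * j y * (ENNReal.ofReal (sqNorm z) * M.G β z)) := by
    calc ∑' x, ENNReal.ofReal (sqNorm x) * M.F β x
        = ∑' x, ∑' y, ENNReal.ofReal (sqNorm x) * (j y * M.G β (x - y)) := by
          simp_rw [ENNReal.tsum_mul_left]; rfl
      _ = ∑' y, ∑' x, ENNReal.ofReal (sqNorm x) * (j y * M.G β (x - y)) := ENNReal.tsum_comm
      _ ≤ _ := by
        refine ENNReal.tsum_le_tsum fun y => ?_
        rw [← (Equiv.addRight y).tsum_eq]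
        refine ENNReal.tsum_le_tsum fun z => ?_
        simp only [Equiv.coe_addRight, add_sub_cancel_right]
        have : ENNReal.ofReal (sqNorm (z + y)) ≤
            2 * ENNReal.ofReal (sqNorm z) + 2 * ENNReal.ofReal (sqNorm y) := by
          have h2 : (2:ℝ≥0∞) = ENNReal.ofReal 2 := by simp
          rw [h2, ← ENNReal.ofReal_mul (by norm_num), ← ENNReal.ofReal_mul (by norm_num),
            ← ENNReal.ofReal_add (by have := sqNorm_nonneg z; positivity)
              (by have := sqNorm_nonneg y; positivity)]
          exact ENNReal.ofReal_le_ofReal (sqNorm_add_le z y)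
        calc _ ≤ (2 * ENNReal.ofReal (sqNorm z) + 2 * ENNReal.ofReal (sqNorm y))
              * (j y * M.G β z) := by gcongr
          _ = _ := by ring
  refine ne_top_of_le_ne_top ?_ e
  simp_rw [ENNReal.tsum_add, ENNReal.tsum_mul_left, ENNReal.tsum_mul_right, ENNReal.tsum_mul_left]
  have hχ := chi_ne_top M hd h0 hβ
  have hq := tsum_sq_G M hd h0 hβ
  exact ENNReal.add_ne_top.2 ⟨ENNReal.mul_ne_top (ENNReal.mul_ne_top (by simp) hjq) hχ,
    ENNReal.mul_ne_top (ENNReal.mul_ne_top (by simp) hjs) hq⟩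

lemma one_le_G {β : ℝ} (h0 : 0 ≤ β) (hβ : ENNReal.ofReal β < M.βc) : 1 ≤ M.G β 0 := by
  have := M.mono 0 le_rfl h0 hβ.le
  rwa [M.init, if_pos rfl] at this

lemma chi_ne_zero {β : ℝ} (h0 : 0 ≤ β) (hβ : ENNReal.ofReal β < M.βc) : M.chi β ≠ 0 := by
  have := (one_le_G M h0 hβ).trans (ENNReal.le_tsum (f := M.G β) 0)
  exact (zero_lt_one.trans_le this).ne'

lemma xi_ne_zero (hd : 0 < d) {β : ℝ} (h0 : 0 ≤ β) (hβ : ENNReal.ofReal β < M.βc) :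
    M.xi β ≠ 0 := by
  unfold Model.xi Model.xiSq
  apply (Real.sqrt_pos.2 _).ne'
  apply ENNReal.toReal_pos
  · refine ENNReal.div_ne_zero.2 ⟨?_, chi_ne_top M hd h0 hβ⟩
    obtain ⟨x, hx, hxR⟩ := M.K.range_attained
    have hx0 : 0 < sqNorm x := by
      refine (sqNorm_nonneg x).lt_of_ne fun h => ?_
      have : x = 0 := by
        unfold sqNorm at h
        have := (Finset.sum_eq_zero_iff_of_nonneg (fun i _ => sq_nonneg _)).1 h.symm
        ext i
        simpa using this i (Finset.mem_univ i)
      rw [this, M.K.zero_at_zero] at hx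
      exact lt_irrefl _ hx
    intro h
    have h1 := ENNReal.tsum_eq_zero.1 h x
    rcases mul_eq_zero.1 h1 with h2 | h2
    · exact absurd hx0 (not_lt.2 (ENNReal.ofReal_eq_zero.1 h2))
    · have h3 := ENNReal.tsum_eq_zero.1 h2 x
      rcases mul_eq_zero.1 h3 with h4 | h4
      · exact absurd hx (not_lt.2 (ENNReal.ofReal_eq_zero.1 h4))
      · rw [sub_self] at h4
        have := one_le_G M h0 hβ
        simp [h4] at this
  · exact ENNReal.div_ne_top (tsum_sq_F M hd h0 hβ) (chi_ne_zero M h0 hβ)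

lemma I1' {β' β : ℝ} (h0 : 0 ≤ β') (hb : β' ≤ β) (hβ : ENNReal.ofReal β < M.βc) (x) :
    M.G β x ≤ M.G β' x + ∑' y, (ENNReal.ofReal (β - β') * M.F β' y) * M.G β (x - y) := by
  refine (M.I1 h0 hb hβ x).trans_eq ?_
  congr 1
  simp_rw [mul_assoc (ENNReal.ofReal (β - β')), ENNReal.tsum_mul_left]
  congr 1
  simp only [Model.F]
  simp_rw [← ENNReal.tsum_mul_right]
  rw [ENNReal.tsum_prod', ENNReal.tsum_comm]
  conv_rhs => rw [ENNReal.tsum_comm]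
  refine tsum_congr fun z => ?_
  rw [← (Equiv.addRight z).tsum_eq (fun y => ENNReal.ofReal (M.K.J z) * M.G β' (y - z) * M.G β (x - y))]
  refine tsum_congr fun w => ?_
  simp only [Equiv.coe_addRight, add_sub_cancel_right]
  rw [sub_sub, mul_comm (M.G β' w)]

def phi (a : ℝ) (y : Fin d → ℤ) : ℝ≥0∞ := ENNReal.ofReal (Real.exp (a * ((e1 y : ℤ) : ℝ)))

lemma phi_add (a : ℝ) (x y : Fin d → ℤ) : phi a (x + y) = phi a x * phi a y := by
  unfold phi
  rw [← ENNReal.ofReal_mul (Real.exp_pos _).le, ← Real.exp_add]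
  congr 2
  unfold e1
  split_ifs
  · simp [mul_add]
  · simp

lemma phi_symm (a : ℝ) (x : Fin d → ℤ) : 2 ≤ phi a x + phi a (-x) := by
  unfold phi
  rw [← ENNReal.ofReal_add (Real.exp_pos _).le (Real.exp_pos _).le]
  have h2 : (2:ℝ≥0∞) = ENNReal.ofReal 2 := by simp
  rw [h2]
  apply ENNReal.ofReal_le_ofReal
  have : ((e1 (-x) : ℤ) : ℝ) = - ((e1 x : ℤ) : ℝ) := by
    unfold e1; split_ifs <;> simp
  rw [this]
  have h1 := Real.add_one_le_exp (a * ((e1 x : ℤ) : ℝ))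
  have h3 := Real.add_one_le_exp (a * -((e1 x : ℤ) : ℝ))
  linarith

lemma tsum_le_tilt (a : ℝ) (f : (Fin d → ℤ) → ℝ≥0∞) (hf : ∀ x, f (-x) = f x) :
    ∑' x, f x ≤ ∑' x, phi a x * f x := by
  have e : ∑' x, phi a (-x) * f x = ∑' x, phi a x * f x := by
    rw [← (Equiv.neg _).tsum_eq]
    simp [hf]
  have : 2 * ∑' x, f x ≤ 2 * ∑' x, phi a x * f x := by
    calc 2 * ∑' x, f x = ∑' x, 2 * f x := ENNReal.tsum_mul_left.symm
      _ ≤ ∑' x, (phi a x * f x + phi a (-x) * f x) := by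
        refine ENNReal.tsum_le_tsum fun x => ?_
        rw [← add_mul]; gcongr; exact phi_symm a x
      _ = _ := by rw [ENNReal.tsum_add, e, two_mul]
  exact (ENNReal.mul_le_mul_iff_right (by simp) (by simp)).1 this

lemma Mgf_eq (β s : ℝ) : M.Mgf β s = (∑' y, phi (s / M.xi β) y * M.F β y) / M.chi β := by
  unfold Model.Mgf Model.effStep phi
  simp_rw [div_eq_mul_inv, ← ENNReal.tsum_mul_right]
  refine tsum_congr fun y => ?_
  ring

end Aux

/-- transfer of moment generating function bounds (`coro:Miteration`). -/
theorem statement10 (d : ℕ) (hd : 2 < d) (c₀ : ℝ) (hc₀ : c₀ ∈ Set.Ioc (0:ℝ) 1)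
    (M : Model d c₀) (β' β : ℝ) (hβ'0 : 0 ≤ β') (hβ'β : β' ≤ β)
    (hβ : ENNReal.ofReal β < M.βc) (s : ℝ)
    (h : ENNReal.ofReal (β - β') * M.chi β' * M.Mgf β' (s * M.xi β' / M.xi β) < 1) :
    M.Mgf β s ≤ M.chi β' / M.chi β * M.Mgf β' (s * M.xi β' / M.xi β) /
      (1 - ENNReal.ofReal (β - β') * M.chi β' * M.Mgf β' (s * M.xi β' / M.xi β)) := by
  have hd0 : 0 < d := by omega
  have hβ' : ENNReal.ofReal β' < M.βc := (ENNReal.ofReal_le_ofReal hβ'β).trans_lt hβ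
  have hχt := Aux.chi_ne_top M hd0 hβ'0 hβ'
  have hχ0 := Aux.chi_ne_zero M hβ'0 hβ'
  have hξ := Aux.xi_ne_zero M hd0 hβ'0 hβ'
  have ha : s * M.xi β' / M.xi β / M.xi β' = s / M.xi β := by
    rw [div_right_comm, mul_div_cancel_right₀ _ hξ]
  rw [Aux.Mgf_eq M β' , ha, mul_assoc, ENNReal.mul_div_cancel hχ0 hχt] at h ⊢
  rw [Aux.Mgf_eq M β]
  set a := s / M.xi β
  set A' := ∑' y, Aux.phi a y * M.F β' y with hA'
  set Δ := ENNReal.ofReal (β - β')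
  have hf : ∑' y, Aux.phi a y * (Δ * M.F β' y) = Δ * A' := by
    rw [hA', ← ENNReal.tsum_mul_left]
    exact tsum_congr fun y => by ring
  obtain ⟨C, hC, c, hc, hdec⟩ := M.expDecay (hβ'0.trans hβ'β) hβ
  have hk := Aux.key (Aux.phi a) (fun y => Δ * M.F β' y) (M.G β) (M.G β') (Aux.phi_add a)
    (fun _ => ENNReal.ofReal_ne_top) (ENNReal.ofReal C) ENNReal.ofReal_ne_top
    (fun x => (hdec x).trans (ENNReal.ofReal_le_ofReal (by
      have : Real.exp (-c * supNorm x) ≤ 1 := Real.exp_le_one_iff.2 (by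
        have := Aux.supNorm_nonneg x
        nlinarith)
      nlinarith)))
    ((Aux.tsum_le_tilt a _ (fun x => by rw [Aux.F_neg])).trans_lt (by rwa [hf]))
    (by rwa [hf]) (Aux.I1' M hβ'0 hβ'β hβ)
  rw [hf] at hk
  have hFb : ∀ b, ∑' y, Aux.phi a y * M.F b y =
      (∑' y, Aux.phi a y * ENNReal.ofReal (M.K.J y)) * ∑' z, Aux.phi a z * M.G b z :=
    fun b => Aux.tsum_conv (Aux.phi a) (fun y => ENNReal.ofReal (M.K.J y)) (M.G b) (Aux.phi_add a)
  have hmain : ∑' y, Aux.phi a y * M.F β y ≤ A' / (1 - Δ * A') := by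
    rw [hFb β]
    refine (mul_le_mul_right hk _).trans_eq ?_
    rw [← mul_div_assoc, ← hFb β']
  calc (∑' y, Aux.phi a y * M.F β y) / M.chi β ≤ (A' / (1 - Δ * A')) / M.chi β := by gcongr
    _ = M.chi β' / M.chi β * (A' / M.chi β') / (1 - Δ * A') := by
      have : M.chi β' * (M.chi β')⁻¹ = 1 := ENNReal.mul_inv_cancel hχ0 hχt
      simp only [div_eq_mul_inv]
      calc _ = (M.chi β' * (M.chi β')⁻¹) * (A' * (1 - Δ * A')⁻¹ * (M.chi β)⁻¹) := by
            rw [this, one_mul]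
        _ = _ := by ring
end
end
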